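/- arXiv:math/0412013 — 2 statements merged into one kernel-verified Lean document; each statement's English description precedes it below -/
import Mathlib

section
/- Let A be a connected graded k-algebra. Then the projective dimension of A as a left A^e-module equals the projective dimension of the trivial module k = A/A_{≥1} as a left A-module (both possibly infinite); the latter equals the global dimension of A. -/
open CategoryTheory Limits TensorProduct

universe u

/-- The injective dimension of a module `M`, defined as the least `n : ℕ∞` for which
there is an injective resolution of `M` that vanishes in all cohomological degrees `> n`. -/
noncomputable def ModuleCat.injDim {R : Type u} [Ring R] (M : ModuleCat.{u} R) : ℕ∞ :=
  sInf {n : ℕ∞ | ∃ I : InjectiveResolution M, ∀ i : ℕ, n < (i : ℕ∞) → IsZero (I.cocomplex.X i)}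

/-- The projective dimension of a module `M`, defined as the least `n : ℕ∞` for which
there is a projective resolution of `M` that vanishes in all homological degrees `> n`. -/
noncomputable def ModuleCat.projDim {R : Type u} [Ring R] (M : ModuleCat.{u} R) : ℕ∞ :=
  sInf {n : ℕ∞ | ∃ P : ProjectiveResolution M, ∀ i : ℕ, n < (i : ℕ∞) → IsZero (P.complex.X i)}

/-- The injective dimension of a ring as a left module over itself. -/
noncomputable def Ring.selfInjDim (R : Type u) [Ring R] : ℕ∞ :=
  ModuleCat.injDim (ModuleCat.of R R)

/-- The left global dimension of a ring: the supremum of the projective dimensions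
of all left `R`-modules. -/
noncomputable def Ring.globalDim (R : Type u) [Ring R] : ℕ∞ :=
  ⨆ M : ModuleCat.{u} R, M.projDim

/-- `A` is a left module over its enveloping algebra `A ⊗[k] Aᵐᵒᵖ`, via `(a ⊗ bᵒᵖ) • x = a * x * b`. -/
noncomputable instance (priority := 50) envModule (k : Type u) [Field k]
    (A : Type u) [Ring A] [Algebra k A] :
    Module (A ⊗[k] Aᵐᵒᵖ) A :=
  TensorProduct.Algebra.module

section PartI

open CategoryTheory Limits

variable {C : Type*} [Category C] [Abelian C]

/-- splice a resolution of the kernel -/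
lemma exists_res_splice {S : ShortComplex C} (hS : S.ShortExact) (hP : Projective S.X₂)
    (Q : ProjectiveResolution S.X₁) : ∃ P : ProjectiveResolution S.X₃,
      ∀ i, P.complex.X (i+1) = Q.complex.X i := by
  have hmono := hS.mono_f
  have hepi := hS.epi_g
  let q : Q.complex.X 0 ⟶ S.X₁ := Q.π.f 0
  have hq0 : Q.complex.d 1 0 ≫ q = 0 := Q.complex_d_comp_π_f_zero
  have hqe : Epi q := by
    have : Epi (Q.π.f 0) := inferInstance
    exact this
  have hqex : (ShortComplex.mk _ _ hq0).Exact :=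
    ShortComplex.exact_of_g_is_cokernel _ Q.isColimitCokernelCofork
  have w : Q.complex.d 1 0 ≫ (q ≫ S.f) = 0 := by
    rw [← Category.assoc, hq0, zero_comp]
  let D := ChainComplex.augment Q.complex (q ≫ S.f) w
  have e0 : (ShortComplex.mk (q ≫ S.f) S.g (by simp)).Exact := by
    let α : ShortComplex.mk (q ≫ S.f) S.g (by simp) ⟶ S :=
      { τ₁ := q, τ₂ := 𝟙 _, τ₃ := 𝟙 _ }
    have : Epi α.τ₁ := hqe
    have : IsIso α.τ₂ := by dsimp [α]; infer_instance
    have : Mono α.τ₃ := by dsimp [α]; infer_instance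
    rw [ShortComplex.exact_iff_of_epi_of_isIso_of_mono α]
    exact hS.exact
  have e1 : (ShortComplex.mk (Q.complex.d 1 0) (q ≫ S.f) w).Exact := by
    let α : ShortComplex.mk _ _ hq0 ⟶ ShortComplex.mk (Q.complex.d 1 0) (q ≫ S.f) w :=
      { τ₁ := 𝟙 _, τ₂ := 𝟙 _, τ₃ := S.f }
    have : Epi α.τ₁ := by dsimp [α]; infer_instance
    have : IsIso α.τ₂ := by dsimp [α]; infer_instance
    have : Mono α.τ₃ := hmono
    rw [← ShortComplex.exact_iff_of_epi_of_isIso_of_mono α]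
    exact hqex
  have hw : D.d 1 0 ≫ S.g = 0 := by
    change (q ≫ S.f) ≫ S.g = 0
    simp
  have hz : ((ChainComplex.toSingle₀Equiv D S.X₃).symm ⟨S.g, hw⟩).f 0 = S.g :=
    ChainComplex.toSingle₀Equiv_symm_apply_f_zero _ _
  refine ⟨{ complex := D
            projective := ?_
            π := (ChainComplex.toSingle₀Equiv _ _).symm ⟨S.g, hw⟩
            quasiIso := ⟨fun n => ?_⟩ }, fun i => rfl⟩
  · rintro (_ | n)
    · exact hP
    · exact Q.projective n
  · cases n with
    | zero =>
      rw [ChainComplex.quasiIsoAt₀_iff, ShortComplex.quasiIso_iff_of_zeros']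
      · refine (ShortComplex.exact_and_epi_g_iff_of_iso ?_).2 ⟨e0, hepi⟩
        exact ShortComplex.isoMk (Iso.refl _) (Iso.refl _) (Iso.refl _)
          ((Category.id_comp _).trans (Category.comp_id _).symm)
          ((Category.id_comp _).trans (Eq.trans
            hz.symm (Category.comp_id _).symm))
      all_goals rfl
    | succ n =>
      rw [quasiIsoAt_iff_exactAt']
      · rw [HomologicalComplex.exactAt_iff' _ (n + 1 + 1) (n + 1) n (by simp) (by simp)]
        cases n with
        | zero => exact e1
        | succ n => exact Q.exact_succ n
      · apply ChainComplex.exactAt_succ_single_obj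

lemma exists_res_of_hpd [EnoughProjectives C] (n : ℕ) (X : C)
    (h : HasProjectiveDimensionLT X (n+1)) :
    ∃ P : ProjectiveResolution X, ∀ i : ℕ, n < i → IsZero (P.complex.X i) := by
  induction n generalizing X with
  | zero =>
    have : Projective X := projective_iff_hasProjectiveDimensionLT_one.2 h
    refine ⟨ProjectiveResolution.self X, fun i hi => ?_⟩
    apply HomologicalComplex.isZero_single_obj_X
    simp; omega
  | succ n ih =>
    let S : ShortComplex C := ShortComplex.mk (kernel.ι (Projective.π X)) (Projective.π X) (by simp)
    have hS : S.ShortExact :=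
      { exact := ShortComplex.exact_of_f_is_kernel _ (kernelIsKernel _)
        mono_f := by dsimp [S]; infer_instance
        epi_g := by dsimp [S]; infer_instance }
    have hP : Projective S.X₂ := Projective.projective_over X
    obtain ⟨Q, hQ⟩ := ih S.X₁ ((hS.hasProjectiveDimensionLT_X₃_iff n hP).1 h)
    obtain ⟨P, hP⟩ := exists_res_splice hS hP Q
    refine ⟨P, fun i hi => ?_⟩
    obtain _ | i := i
    · omega
    · rw [hP]; exact hQ i (by omega)

lemma hpd_of_res (n : ℕ) (X : C) (P : ProjectiveResolution X)
    (hP : ∀ i : ℕ, n < i → IsZero (P.complex.X i)) : HasProjectiveDimensionLT X (n+1) := by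
  let := HasExt.standard C
  rw [hasProjectiveDimensionLT_iff]
  intro i hi Y e
  obtain ⟨f, hf, rfl⟩ := P.extMk_surjective e (i+1) rfl
  obtain rfl : f = 0 := (hP i (by omega)).eq_of_src _ _
  simp

lemma projDim_le_iff {R : Type u} [Ring R] (M : ModuleCat.{u} R) (n : ℕ) :
    M.projDim ≤ n ↔ HasProjectiveDimensionLT M (n+1) := by
  constructor
  · intro h
    have hne : {n : ℕ∞ | ∃ P : ProjectiveResolution M,
        ∀ i : ℕ, n < (i : ℕ∞) → IsZero (P.complex.X i)}.Nonempty :=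
      ⟨⊤, (HasProjectiveResolution.out (Z := M)).some, fun i hi => by simp at hi⟩
    obtain ⟨P, hP⟩ := csInf_mem hne
    refine hpd_of_res n M P fun i hi => hP i (lt_of_le_of_lt h ?_)
    exact_mod_cast hi
  · intro h
    obtain ⟨P, hP⟩ := exists_res_of_hpd n M h
    exact sInf_le ⟨P, fun i hi => hP i (by exact_mod_cast hi)⟩

end PartI

section PartII

open Finset

/-- graded module structure by projections -/
structure Gr {R : Type*} [Ring R] (𝒢 : ℕ → Set R) (X : Type*) [AddCommGroup X] [Module R X] where
  p : ℕ → X →+ X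
  sum : ∀ x, ∃ N, ∀ M ≥ N, ∑ i ∈ range M, p i x = x
  orth : ∀ i j x, p i (p j x) = if i = j then p j x else 0
  smul : ∀ i, ∀ r ∈ 𝒢 i, ∀ n x, p n (r • x) = if i ≤ n then r • p (n - i) x else 0

/-- graded connected augmented ring -/
structure GrRing {k R : Type*} [Field k] [Ring R] [Algebra k R] (𝒢 : ℕ → Set R)
    (η : R →ₐ[k] k) where
  q : Gr 𝒢 R
  mem : ∀ i r, q.p i r ∈ AddSubgroup.closure (𝒢 i)
  self : ∀ i, ∀ r ∈ 𝒢 i, q.p i r = r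
  zero : ∀ r ∈ 𝒢 0, r = algebraMap k R (η r)
  alg : ∀ c, algebraMap k R c ∈ 𝒢 0
  pos : ∀ i, ∀ r ∈ 𝒢 i, 0 < i → η r = 0

/-- `J X` -/
def Jsub {k R : Type*} [Field k] [Ring R] [Algebra k R] (η : R →ₐ[k] k)
    (X : Type*) [AddCommGroup X] [Module R X] : Submodule R X where
  carrier := AddSubgroup.closure {z : X | ∃ j x, η j = 0 ∧ z = j • x}
  add_mem' := fun ha hb => add_mem ha hb
  zero_mem' := zero_mem (AddSubgroup.closure _)
  smul_mem' := by
    intro c z hz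
    induction hz using AddSubgroup.closure_induction with
    | mem z h =>
      obtain ⟨j, x, hj, rfl⟩ := h
      exact AddSubgroup.subset_closure ⟨c * j, x, by simp [hj], by rw [mul_smul]⟩
    | zero => rw [smul_zero]; exact zero_mem (AddSubgroup.closure _)
    | add x y _ _ hx hy => rw [smul_add]; exact add_mem hx hy
    | neg x _ hx => rw [smul_neg]; exact neg_mem hx

lemma Jsub_induction {k R : Type*} [Field k] [Ring R] [Algebra k R] {η : R →ₐ[k] k}
    {X : Type*} [AddCommGroup X] [Module R X] (S : AddSubgroup X)
    (h : ∀ j x, η j = 0 → j • x ∈ S) : ∀ z ∈ Jsub η X, z ∈ S := by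
  intro z hz
  have : AddSubgroup.closure {z : X | ∃ j x, η j = 0 ∧ z = j • x} ≤ S := by
    rw [AddSubgroup.closure_le]
    rintro _ ⟨j, x, hj, rfl⟩
    exact h j x hj
  exact this hz

lemma smul_mem_Jsub {k R : Type*} [Field k] [Ring R] [Algebra k R] {η : R →ₐ[k] k}
    {X : Type*} [AddCommGroup X] [Module R X] (j : R) (x : X) (hj : η j = 0) :
    j • x ∈ Jsub η X := AddSubgroup.subset_closure ⟨j, x, hj, rfl⟩

variable {k R : Type u} [Field k] [Ring R] [Algebra k R] {𝒢 : ℕ → Set R} {η : R →ₐ[k] k}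

lemma Gr.smul' {X : Type*} [AddCommGroup X] [Module R X] (g : Gr 𝒢 X) (i : ℕ) (r : R)
    (hr : r ∈ AddSubgroup.closure (𝒢 i)) (n : ℕ) (x : X) :
    g.p n (r • x) = if i ≤ n then r • g.p (n - i) x else 0 := by
  induction hr using AddSubgroup.closure_induction with
  | mem r h => exact g.smul i r h n x
  | zero => simp
  | add r s _ _ hr hs => rw [add_smul, map_add, hr, hs]; split_ifs <;> simp [add_smul]
  | neg r _ hr => rw [neg_smul, map_neg, hr]; split_ifs <;> simp

lemma GrRing.zero_comp (G : GrRing 𝒢 η) (r : R) (hr : η r = 0) : G.q.p 0 r = 0 := by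
  have h1 : ∀ r ∈ AddSubgroup.closure (𝒢 0), r = algebraMap k R (η r) := by
    intro r hr
    induction hr using AddSubgroup.closure_induction with
    | mem r h => exact G.zero r h
    | zero => simp
    | add r s _ _ hr hs => rw [map_add, map_add, ← hr, ← hs]
    | neg r _ hr => rw [map_neg, map_neg, ← hr]
  have h2 : ∀ i, 0 < i → ∀ r ∈ AddSubgroup.closure (𝒢 i), η r = 0 := by
    intro i hi r hr
    induction hr using AddSubgroup.closure_induction with
    | mem r h => exact G.pos i r h hi
    | zero => simp
    | add r s _ _ hr hs => rw [map_add, hr, hs, add_zero]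
    | neg r _ hr => rw [map_neg, hr, neg_zero]
  obtain ⟨N, hN⟩ := G.q.sum r
  have h3 := hN (N+1) (by omega)
  rw [Finset.sum_range_succ'] at h3
  have h4 : η (G.q.p 0 r) = 0 := by
    rw [← h3, map_add, map_sum, Finset.sum_eq_zero, zero_add] at hr
    · exact hr
    · intro i _
      exact h2 (i+1) (by omega) _ (G.mem _ _)
  rw [h1 _ (G.mem 0 r), h4, map_zero]

lemma nak_step (G : GrRing 𝒢 η) {X : Type*} [AddCommGroup X] [Module R X] (g : Gr 𝒢 X)
    (N : Submodule R X) (n : ℕ) (IH : ∀ m < n, ∀ x, g.p m x ∈ N) (z : X) (hz : z ∈ Jsub η X) :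
    g.p n z ∈ N := by
  refine Jsub_induction (N.toAddSubgroup.comap (g.p n)) ?_ z hz
  intro j x hj
  change g.p n (j • x) ∈ N
  obtain ⟨M, hM⟩ := G.q.sum j
  rw [← hM M le_rfl, Finset.sum_smul, map_sum]
  refine sum_mem fun i _ => ?_
  rw [g.smul' i _ (G.mem i j)]
  split_ifs with h
  · obtain rfl | hi := Nat.eq_zero_or_pos i
    · rw [G.zero_comp j hj]; simp
    · exact N.smul_mem _ (IH _ (by omega) _)
  · exact zero_mem _

lemma Gr.mem_of {X : Type*} [AddCommGroup X] [Module R X] (g : Gr 𝒢 X)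
    (N : Submodule R X) (h : ∀ n x, g.p n x ∈ N) : N = ⊤ := by
  rw [eq_top_iff]
  intro x _
  obtain ⟨M, hM⟩ := g.sum x
  rw [← hM M le_rfl]
  exact sum_mem fun i _ => h i x

lemma nakayama (G : GrRing 𝒢 η) {X : Type*} [AddCommGroup X] [Module R X] (g : Gr 𝒢 X)
    (h : Jsub η X = ⊤) (x : X) : x = 0 := by
  have : (⊥ : Submodule R X) = ⊤ := by
    apply g.mem_of
    intro n
    induction n using Nat.strong_induction_on with
    | _ n ih =>
      intro x
      exact nak_step G g ⊥ n ih x (by rw [h]; trivial)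
  have hx : x ∈ (⊥ : Submodule R X) := by rw [this]; trivial
  simpa using hx

lemma GrRing.q_of_mem (G : GrRing 𝒢 η) (i : ℕ) (r : R) (hr : r ∈ AddSubgroup.closure (𝒢 i))
    (m : ℕ) : G.q.p m r = if m = i then r else 0 := by
  have h1 : G.q.p i r = r := by
    induction hr using AddSubgroup.closure_induction with
    | mem r h => exact G.self i r h
    | zero => simp
    | add r s _ _ hr hs => rw [map_add, hr, hs]
    | neg r _ hr => rw [map_neg, hr]
  rw [← h1, G.q.orth, h1]

/-- shifted projection -/
noncomputable def qsh (G : GrRing 𝒢 η) (d n : ℕ) : R →+ R := if d ≤ n then G.q.p (n - d) else 0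

lemma p_smul_hom (G : GrRing 𝒢 η) {X : Type*} [AddCommGroup X] [Module R X] (g : Gr 𝒢 X)
    (d : ℕ) (x : X) (hx : g.p d x = x) (n : ℕ) (r : R) :
    g.p n (r • x) = qsh G d n r • x := by
  obtain ⟨M, hM⟩ := G.q.sum r
  rw [← hM M le_rfl, Finset.sum_smul, map_sum, map_sum, Finset.sum_smul]
  refine Finset.sum_congr rfl fun i _ => ?_
  rw [g.smul' i _ (G.mem i r)]
  have : g.p (n - i) x = if n - i = d then x else 0 := by
    rw [← hx, g.orth]
  rw [this, qsh]
  by_cases h1 : i ≤ n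
  · by_cases h2 : d ≤ n
    · rw [if_pos h1, if_pos h2, G.q_of_mem i _ (G.mem i r)]
      by_cases h3 : n - i = d
      · rw [if_pos h3, if_pos (by omega)]
      · rw [if_neg h3, if_neg (by omega)]; simp
    · rw [if_pos h1, if_neg h2, if_neg (by omega)]; simp
  · rw [if_neg h1]
    split_ifs with h2
    · rw [G.q_of_mem i _ (G.mem i r), if_neg (by omega)]; simp
    · simp

lemma qsh_sum (G : GrRing 𝒢 η) (d : ℕ) (r : R) :
    ∃ N, ∀ M ≥ N, ∑ i ∈ range M, qsh G d i r = r := by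
  obtain ⟨N, hN⟩ := G.q.sum r
  refine ⟨d + N, fun M hM => ?_⟩
  obtain ⟨M, rfl⟩ := Nat.exists_eq_add_of_le (show d ≤ M by omega)
  rw [Finset.sum_range_add, Finset.sum_eq_zero, zero_add]
  · refine Eq.trans (Finset.sum_congr rfl fun i _ => ?_) (hN M (by omega))
    simp [qsh]
  · intro i hi
    have := Finset.mem_range.1 hi
    rw [qsh, if_neg (by omega)]; rfl

lemma qsh_orth (G : GrRing 𝒢 η) (d i j : ℕ) (r : R) :
    qsh G d i (qsh G d j r) = if i = j then qsh G d j r else 0 := by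
  unfold qsh
  by_cases hj : d ≤ j
  · by_cases hi : d ≤ i
    · rw [if_pos hj, if_pos hi, G.q.orth]
      by_cases h : i = j
      · rw [if_pos h, if_pos (by omega)]
      · rw [if_neg h, if_neg (by omega)]
    · rw [if_pos hj, if_neg hi, if_neg (by omega)]; rfl
  · rw [if_neg hj]; simp

lemma qsh_smul (G : GrRing 𝒢 η) (d i : ℕ) (r : R) (hr : r ∈ 𝒢 i) (n : ℕ) (s : R) :
    qsh G d n (r • s) = if i ≤ n then r • qsh G d (n - i) s else 0 := by
  unfold qsh
  by_cases hd : d ≤ n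
  · rw [if_pos hd, G.q.smul i r hr]
    by_cases h : i ≤ n
    · rw [if_pos h]
      by_cases h' : i ≤ n - d
      · rw [if_pos h', if_pos (by omega), show n - d - i = n - i - d by omega]
      · rw [if_neg h', if_neg (by omega)]; simp
    · rw [if_neg h, if_neg (by omega)]
  · rw [if_neg hd]
    split_ifs
    · omega
    · simp
    · simp

/-- graded free module -/
noncomputable def GrFree (G : GrRing 𝒢 η) {B : Type*} (d : B → ℕ) : Gr 𝒢 (B →₀ R) where
  p n := Finsupp.liftAddHom fun b => (Finsupp.singleAddHom b).comp (qsh G (d b) n)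
  sum x := by
    induction x using Finsupp.induction_linear with
    | zero => exact ⟨0, by simp⟩
    | add f g hf hg =>
      obtain ⟨N, hN⟩ := hf
      obtain ⟨N', hN'⟩ := hg
      refine ⟨max N N', fun M hM => ?_⟩
      simp only [map_add, Finset.sum_add_distrib]
      rw [hN M (le_trans (le_max_left _ _) hM), hN' M (le_trans (le_max_right _ _) hM)]
    | single b r =>
      obtain ⟨N, hN⟩ := qsh_sum G (d b) r
      refine ⟨N, fun M hM => ?_⟩
      simp only [Finsupp.liftAddHom_apply_single, AddMonoidHom.comp_apply,
        Finsupp.singleAddHom_apply]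
      rw [← Finsupp.single_finsetSum, hN M hM]
  orth i j x := by
    induction x using Finsupp.induction_linear with
    | zero => simp
    | add f g hf hg => rw [map_add, map_add, hf, hg]; split_ifs <;> simp
    | single b r =>
      simp only [Finsupp.liftAddHom_apply_single, AddMonoidHom.comp_apply,
        Finsupp.singleAddHom_apply, qsh_orth]
      split_ifs <;> simp
  smul i r hr n x := by
    induction x using Finsupp.induction_linear with
    | zero => simp
    | add f g hf hg => rw [smul_add, map_add, map_add, hf, hg]; split_ifs <;> simp
    | single b s =>
      rw [Finsupp.smul_single]
      simp only [Finsupp.liftAddHom_apply_single, AddMonoidHom.comp_apply,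
        Finsupp.singleAddHom_apply, qsh_smul G _ _ _ hr]
      split_ifs <;> simp

/-- graded kernel -/
def GrKer {X Y : Type*} [AddCommGroup X] [Module R X] [AddCommGroup Y] [Module R Y]
    (gX : Gr 𝒢 X) (gY : Gr 𝒢 Y) (φ : X →ₗ[R] Y) (h : ∀ n x, φ (gX.p n x) = gY.p n (φ x)) :
    Gr 𝒢 (LinearMap.ker φ) where
  p n := ((gX.p n).comp (LinearMap.ker φ).toAddSubgroup.subtype).codRestrict
    (LinearMap.ker φ).toAddSubgroup (fun x => by
      change φ (gX.p n x.1) = 0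
      rw [h, show φ x.1 = 0 from x.2, map_zero])
  sum x := by
    obtain ⟨N, hN⟩ := gX.sum x.1
    refine ⟨N, fun M hM => Subtype.ext ?_⟩
    rw [AddSubmonoidClass.coe_finset_sum]
    exact hN M hM
  orth i j x := Subtype.ext <| by
    refine (gX.orth i j x.1).trans ?_
    split_ifs <;> rfl
  smul i r hr n x := Subtype.ext <| by
    refine (gX.smul i r hr n x.1).trans ?_
    split_ifs <;> rfl

lemma cover (G : GrRing 𝒢 η) {X : Type u} [AddCommGroup X] [Module R X] (g : Gr 𝒢 X) :
    ∃ (B : Type u) (φ : (B →₀ R) →ₗ[R] X), Function.Surjective φ ∧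
      (∀ f, φ f = 0 → ∀ b, η (f b) = 0) ∧ Nonempty (Gr 𝒢 (LinearMap.ker φ)) := by
  letI : Module k X := Module.compHom X (algebraMap k R)
  haveI : IsScalarTower k R X := ⟨fun c r x => by
    change (c • r) • x = algebraMap k R c • (r • x)
    rw [Algebra.smul_def, mul_smul]⟩
  have hk : ∀ (c : k) (x : X), c • x = algebraMap k R c • x := fun c x => rfl
  let W : Submodule k X := (Jsub η X).restrictScalars k
  let H := {x : X // ∃ d, g.p d x = x}
  obtain ⟨B, a, -, hspan, hli⟩ := exists_linearIndependent' k (fun h : H => W.mkQ h.1)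
  choose d hd using fun b => (a b).2
  let xb : B → X := fun b => (a b).1
  let φ : (B →₀ R) →ₗ[R] X := Finsupp.linearCombination R xb
  have hφ1 : ∀ b r, φ (Finsupp.single b r) = r • xb b := fun b r => by
    simp [φ]
  refine ⟨B, φ, ?_, ?_, ⟨GrKer (GrFree G d) g φ ?_⟩⟩
  · rw [← LinearMap.range_eq_top]
    apply g.mem_of
    intro n
    induction n using Nat.strong_induction_on with
    | _ n ih =>
      intro x
      have h1 : W.mkQ (g.p n x) ∈ Submodule.span k (Set.range ((fun h : H => W.mkQ h.1) ∘ a)) := by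
        rw [hspan]
        exact Submodule.subset_span ⟨⟨g.p n x, n, by rw [g.orth, if_pos rfl]⟩, rfl⟩
      rw [Finsupp.mem_span_range_iff_exists_finsupp] at h1
      obtain ⟨c, hc⟩ := h1
      have h2 : (g.p n x - c.sum fun b t => t • xb b) ∈ W := by
        rw [← Submodule.ker_mkQ W, LinearMap.mem_ker, map_sub, ← hc, Finsupp.sum, Finsupp.sum,
          map_sum]
        simp [xb]
      have h3 := nak_step G g (LinearMap.range φ) n ih _ h2
      rw [map_sub, g.orth, if_pos rfl, Finsupp.sum, map_sum] at h3
      rw [← sub_add_cancel (g.p n x) (∑ b ∈ c.support, g.p n (c b • xb b))]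
      refine add_mem h3 (sum_mem fun b _ => ?_)
      rw [hk, p_smul_hom G g (d b) (xb b) (hd b), ← hφ1]
      exact ⟨_, rfl⟩
  · intro f hf b
    have h1 : W.mkQ (φ f) = (f.mapRange η (map_zero η)).sum
        fun b t => t • ((fun h : H => W.mkQ h.1) ∘ a) b := by
      rw [Finsupp.sum_mapRange_index (by simp), Finsupp.linearCombination_apply, Finsupp.sum,
        Finsupp.sum, map_sum]
      refine Finset.sum_congr rfl fun b _ => ?_
      change W.mkQ (f b • xb b) = η (f b) • W.mkQ (xb b)
      rw [← map_smul, ← sub_eq_zero, ← map_sub, ← LinearMap.mem_ker, Submodule.ker_mkQ, hk,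
        ← sub_smul]
      exact smul_mem_Jsub _ _ (by simp)
    rw [hf, map_zero] at h1
    have h2 := (linearIndependent_iff.1 hli) (f.mapRange η (map_zero η)) (by
      rw [Finsupp.linearCombination_apply, ← h1])
    simpa using DFunLike.congr_fun h2 b
  · intro n f
    induction f using Finsupp.induction_linear with
    | zero => simp
    | add f g hf hg => simp only [map_add, hf, hg]
    | single b r =>
      rw [hφ1, p_smul_hom G g (d b) (xb b) (hd b), ← hφ1]
      simp [GrFree]

end PartII

section PartIII

open MulOpposite

variable (k A : Type u) [Field k] [Ring A] [Algebra k A]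

/-- relations for `X ⊗_A M` -/
def TW (X M : Type u) [AddCommGroup X] [Module (A ⊗[k] Aᵐᵒᵖ) X] [AddCommGroup M] [Module A M] :
    Submodule ℤ (X ⊗[ℤ] M) :=
  Submodule.span ℤ {t | ∃ (x : X) (a : A) (m : M),
    t = (((1 : A) ⊗ₜ[k] op a) • x) ⊗ₜ[ℤ] m - x ⊗ₜ[ℤ] (a • m)}

/-- `X ⊗_A M` -/
def TM (X M : Type u) [AddCommGroup X] [Module (A ⊗[k] Aᵐᵒᵖ) X] [AddCommGroup M] [Module A M] :
    Type u := (X ⊗[ℤ] M) ⧸ TW k A X M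

variable (X Y Z M : Type u) [AddCommGroup X] [Module (A ⊗[k] Aᵐᵒᵖ) X]
  [AddCommGroup Y] [Module (A ⊗[k] Aᵐᵒᵖ) Y] [AddCommGroup Z] [Module (A ⊗[k] Aᵐᵒᵖ) Z]
  [AddCommGroup M] [Module A M]

noncomputable instance : AddCommGroup (TM k A X M) :=
  inferInstanceAs (AddCommGroup ((X ⊗[ℤ] M) ⧸ TW k A X M))

variable {X Y Z M}

/-- pure tensors -/
noncomputable def tmk (x : X) (m : M) : TM k A X M :=
  Submodule.Quotient.mk (p := TW k A X M) (x ⊗ₜ[ℤ] m)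

lemma tmk_add_left (x y : X) (m : M) : tmk k A (x + y) m = tmk k A x m + tmk k A y m := by
  unfold tmk; rw [TensorProduct.add_tmul]; rfl

lemma tmk_add_right (x : X) (m n : M) : tmk k A x (m + n) = tmk k A x m + tmk k A x n := by
  unfold tmk; rw [TensorProduct.tmul_add]; rfl

lemma tmk_zero_left (m : M) : tmk k A (0 : X) m = 0 := by
  have := tmk_add_left k A (0 : X) 0 m
  rw [add_zero] at this
  exact left_eq_add.1 this

lemma tmk_bal (x : X) (a : A) (m : M) :
    tmk k A (((1 : A) ⊗ₜ[k] op a) • x) m = tmk k A x (a • m) := by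
  refine (Submodule.Quotient.eq (TW k A X M)).2 ?_
  exact Submodule.subset_span ⟨x, a, m, rfl⟩

variable {k A}

lemma TM.induction {P : TM k A X M → Prop} (h0 : P 0) (hm : ∀ x m, P (tmk k A x m))
    (ha : ∀ s t, P s → P t → P (s + t)) (t : TM k A X M) : P t := by
  obtain ⟨t, rfl⟩ := Submodule.Quotient.mk_surjective (TW k A X M) t
  induction t using TensorProduct.induction_on with
  | zero => exact h0
  | tmul x m => exact hm x m
  | add s t hs ht => exact ha _ _ hs ht

lemma TM.hom_ext {N : Type*} [AddCommGroup N] {f g : TM k A X M →+ N}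
    (h : ∀ x m, f (tmk k A x m) = g (tmk k A x m)) (t : TM k A X M) : f t = g t := by
  induction t using TM.induction with
  | h0 => simp
  | hm x m => exact h x m
  | ha s t hs ht => rw [map_add, map_add, hs, ht]

/-- universal property -/
noncomputable def TM.lift {N : Type*} [AddCommGroup N] (f : X →+ M →+ N)
    (hf : ∀ (x : X) (a : A) (m : M), f (((1 : A) ⊗ₜ[k] op a) • x) m = f x (a • m)) : TM k A X M →+ N :=
  ((TW k A X M).liftQ (TensorProduct.lift
    (AddMonoidHom.toIntLinearMap
      ((AddMonoidHom.mk' (fun g : M →+ N => g.toIntLinearMap) (fun _ _ => rfl)).comp f))) (by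
    rw [TW, Submodule.span_le]
    rintro _ ⟨x, a, m, rfl⟩
    refine LinearMap.mem_ker.2 ((map_sub _ _ _).trans (sub_eq_zero.2 ?_))
    exact hf x a m)).toAddMonoidHom

@[simp] lemma TM.lift_tmk {N : Type*} [AddCommGroup N] (f : X →+ M →+ N)
    (hf : ∀ (x : X) (a : A) (m : M), f (((1 : A) ⊗ₜ[k] op a) • x) m = f x (a • m)) (x : X) (m : M) :
    TM.lift f hf (tmk k A x m) = f x m := rfl

/-- constructor of biadditive maps -/
def biadd {N : Type*} [AddCommGroup N] (f : X → M → N)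
    (h1 : ∀ x y m, f (x + y) m = f x m + f y m) (h2 : ∀ x m n, f x (m + n) = f x m + f x n) :
    X →+ M →+ N :=
  AddMonoidHom.mk' (fun x => AddMonoidHom.mk' (f x) (h2 x)) (fun x y => by
    ext m; exact h1 x y m)

@[simp] lemma biadd_apply {N : Type*} [AddCommGroup N] (f : X → M → N)
    (h1 : ∀ x y m, f (x + y) m = f x m + f y m) (h2 : ∀ x m n, f x (m + n) = f x m + f x n)
    (x : X) (m : M) : biadd f h1 h2 x m = f x m := rfl

/-- functoriality in right linear maps -/
noncomputable def Tmap (f : X →+ Y)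
    (hf : ∀ (a : A) x, f (((1 : A) ⊗ₜ[k] op a) • x) = ((1 : A) ⊗ₜ[k] op a) • f x) :
    TM k A X M →+ TM k A Y M :=
  TM.lift (biadd (fun x m => tmk k A (f x) m) (fun x y m => by rw [map_add, tmk_add_left])
    (fun x m n => tmk_add_right _ _ _ _ _)) (fun x a m => by
      simp only [biadd_apply]
      rw [hf, tmk_bal])

@[simp] lemma Tmap_tmk (f : X →+ Y)
    (hf : ∀ (a : A) x, f (((1 : A) ⊗ₜ[k] op a) • x) = ((1 : A) ⊗ₜ[k] op a) • f x)
    (x : X) (m : M) : Tmap f hf (tmk k A x m) = tmk k A (f x) m := rfl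

lemma lr_comm (a b : A) (x : X) : (a ⊗ₜ[k] (1 : Aᵐᵒᵖ)) • (((1 : A) ⊗ₜ[k] op b) • x) =
    ((1 : A) ⊗ₜ[k] op b) • ((a ⊗ₜ[k] (1 : Aᵐᵒᵖ)) • x) := by
  rw [smul_smul, smul_smul]; simp

lemma lr_eq (a b : A) (x : X) : (a ⊗ₜ[k] op b) • x =
    (a ⊗ₜ[k] (1 : Aᵐᵒᵖ)) • (((1 : A) ⊗ₜ[k] op b) • x) := by
  rw [smul_smul]; simp

/-- left action -/
noncomputable def Tact (a : A) : TM k A X M →+ TM k A X M :=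
  Tmap (DistribSMul.toAddMonoidHom X (a ⊗ₜ[k] (1 : Aᵐᵒᵖ))) (fun b x => lr_comm a b x)

@[simp] lemma Tact_tmk (a : A) (x : X) (m : M) :
    Tact a (tmk k A x m) = tmk k A ((a ⊗ₜ[k] (1 : Aᵐᵒᵖ)) • x) m := rfl

noncomputable instance : Module A (TM k A X M) where
  smul a t := Tact a t
  one_smul t := TM.hom_ext (f := Tact 1) (g := AddMonoidHom.id _) (fun x m => by
    rw [Tact_tmk, ← Algebra.TensorProduct.one_def, one_smul]; rfl) t
  mul_smul a b t := TM.hom_ext (f := Tact (a * b)) (g := (Tact a).comp (Tact b)) (fun x m => by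
    simp only [AddMonoidHom.comp_apply, Tact_tmk, smul_smul]; simp) t
  smul_zero a := map_zero (Tact a)
  smul_add a := map_add (Tact a)
  add_smul a b t := TM.hom_ext (f := Tact (a + b)) (g := Tact a + Tact b) (fun x m => by
    simp only [AddMonoidHom.add_apply, Tact_tmk, TensorProduct.add_tmul, add_smul,
      tmk_add_left]) t
  zero_smul t := TM.hom_ext (f := Tact 0) (g := 0) (fun x m => by
    rw [Tact_tmk, TensorProduct.zero_tmul]
    change tmk k A ((0 : A ⊗[k] Aᵐᵒᵖ) • x) m = 0
    exact (congrArg (fun y => tmk k A y m) (zero_smul (A ⊗[k] Aᵐᵒᵖ) x)).trans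
      (tmk_zero_left k A m)) t

lemma smul_tmk (a : A) (x : X) (m : M) :
    a • tmk k A x m = tmk k A ((a ⊗ₜ[k] (1 : Aᵐᵒᵖ)) • x) m := rfl

/-- upgrade to linear maps -/
noncomputable def TM.toLin {N : Type*} [AddCommGroup N] [Module A N] (f : TM k A X M →+ N)
    (h : ∀ (a : A) x m, f (tmk k A ((a ⊗ₜ[k] (1 : Aᵐᵒᵖ)) • x) m) = a • f (tmk k A x m)) :
    TM k A X M →ₗ[A] N where
  toFun := f
  map_add' := map_add f
  map_smul' a t := TM.hom_ext (f := f.comp (Tact a))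
    (g := (DistribSMul.toAddMonoidHom N a).comp f) (fun x m => h a x m) t

variable (M) in
/-- functoriality in bimodule maps -/
noncomputable def TmapL (f : X →ₗ[A ⊗[k] Aᵐᵒᵖ] Y) : TM k A X M →ₗ[A] TM k A Y M :=
  TM.toLin (Tmap f.toAddMonoidHom (fun a x => map_smul f _ x)) (fun a x m =>
    congrArg (fun y => tmk k A y m) (map_smul f (a ⊗ₜ[k] (1 : Aᵐᵒᵖ)) x))

@[simp] lemma TmapL_tmk (f : X →ₗ[A ⊗[k] Aᵐᵒᵖ] Y) (x : X) (m : M) :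
    TmapL M f (tmk k A x m) = tmk k A (f x) m := rfl

/-- underlying right module -/
def Rt (k A X : Type u) [Field k] [Ring A] [Algebra k A] [AddCommGroup X]
    [Module (A ⊗[k] Aᵐᵒᵖ) X] : Type u := X

instance : AddCommGroup (Rt k A X) := inferInstanceAs (AddCommGroup X)

noncomputable instance : Module Aᵐᵒᵖ (Rt k A X) :=
  Module.compHom X (Algebra.TensorProduct.includeRight : Aᵐᵒᵖ →ₐ[k] A ⊗[k] Aᵐᵒᵖ).toRingHom

lemma Rt_smul (b : Aᵐᵒᵖ) (x : X) :
    (b • (show Rt k A X from x) : Rt k A X) = (((1 : A) ⊗ₜ[k] b) • x : X) := rfl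

/-- bimodule maps are right linear -/
def Rtmap (f : X →ₗ[A ⊗[k] Aᵐᵒᵖ] Y) : Rt k A X →ₗ[Aᵐᵒᵖ] Rt k A Y where
  toFun := f
  map_add' := map_add f
  map_smul' b x := map_smul f _ (show X from x)

lemma exists_section (φ : X →ₗ[A ⊗[k] Aᵐᵒᵖ] Y) (hφ : Function.Surjective φ)
    [Module.Projective Aᵐᵒᵖ (Rt k A Y)] :
    ∃ s : Y →+ X, (∀ (b : Aᵐᵒᵖ) y, s (((1 : A) ⊗ₜ[k] b) • y) = ((1 : A) ⊗ₜ[k] b) • s y) ∧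
      ∀ y, φ (s y) = y := by
  obtain ⟨s, hs⟩ := Module.projective_lifting_property (Rtmap φ) LinearMap.id hφ
  exact ⟨(s.toAddMonoidHom : Rt k A Y →+ Rt k A X), fun b y => s.map_smul b (show Rt k A Y from y),
    fun y => LinearMap.congr_fun hs y⟩

lemma exists_retr (i : Z →ₗ[A ⊗[k] Aᵐᵒᵖ] X) (φ : X →ₗ[A ⊗[k] Aᵐᵒᵖ] Y)
    (hi : Function.Injective i) (hex : Function.Exact i φ) (hφ : Function.Surjective φ)
    [Module.Projective Aᵐᵒᵖ (Rt k A Y)] :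
    ∃ (s : Y →+ X) (r : X →+ Z),
      (∀ (b : Aᵐᵒᵖ) y, s (((1 : A) ⊗ₜ[k] b) • y) = ((1 : A) ⊗ₜ[k] b) • s y) ∧
      (∀ (b : Aᵐᵒᵖ) y, r (((1 : A) ⊗ₜ[k] b) • y) = ((1 : A) ⊗ₜ[k] b) • r y) ∧
      (∀ y, φ (s y) = y) ∧ (∀ x, r (i x) = x) ∧
      (∀ x, i (r x) + s (φ x) = x) := by
  obtain ⟨s, hsl, hs⟩ := exists_section φ hφ
  have h : ∀ x, ∃ z, i z = x - s (φ x) := fun x => (hex _).1 (by rw [map_sub, hs, sub_self])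
  choose r0 hr0 using h
  let r : X →+ Z := AddMonoidHom.mk' r0 (fun x y => hi (by
    rw [hr0, map_add i, hr0, hr0, map_add φ, map_add]; abel))
  have hr : ∀ x, i (r x) = x - s (φ x) := hr0
  refine ⟨s, r, hsl, fun b x => hi ?_, hs, fun x => hi ?_, fun x => ?_⟩
  · rw [map_smul i, hr, hr, map_smul φ, smul_sub, hsl]
  · rw [hr, (hex _).2 ⟨x, rfl⟩, map_zero, sub_zero]
  · rw [hr]; exact sub_add_cancel x (s (φ x))

lemma Rt_ker_projective (i : Z →ₗ[A ⊗[k] Aᵐᵒᵖ] X) (φ : X →ₗ[A ⊗[k] Aᵐᵒᵖ] Y)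
    (hi : Function.Injective i) (hex : Function.Exact i φ) (hφ : Function.Surjective φ)
    [Module.Projective Aᵐᵒᵖ (Rt k A Y)] [Module.Projective Aᵐᵒᵖ (Rt k A X)] :
    Module.Projective Aᵐᵒᵖ (Rt k A Z) := by
  obtain ⟨s, r, -, hrl, -, hr, -⟩ := exists_retr i φ hi hex hφ
  let r' : Rt k A X →ₗ[Aᵐᵒᵖ] Rt k A Z :=
    { toFun := r
      map_add' := map_add r
      map_smul' := hrl }
  exact Module.Projective.of_split (Rtmap i) r' (LinearMap.ext hr)

lemma T_exact_aux (i : Z →ₗ[A ⊗[k] Aᵐᵒᵖ] X) (φ : X →ₗ[A ⊗[k] Aᵐᵒᵖ] Y)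
    (s : Y →+ X) (r : X →+ Z)
    (hsl : ∀ (b : Aᵐᵒᵖ) y, s (((1 : A) ⊗ₜ[k] b) • y) = ((1 : A) ⊗ₜ[k] b) • s y)
    (hrl : ∀ (b : Aᵐᵒᵖ) y, r (((1 : A) ⊗ₜ[k] b) • y) = ((1 : A) ⊗ₜ[k] b) • r y)
    (hs : ∀ y, φ (s y) = y) (hr : ∀ x, r (i x) = x) (hsr : ∀ x, i (r x) + s (φ x) = x)
    (h0 : ∀ x, φ (i x) = 0) :
    Function.Injective (TmapL M i) ∧
    Function.Exact (TmapL M i) (TmapL M φ) ∧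
    Function.Surjective (TmapL M φ) := by
  let Ts : TM k A Y M →+ TM k A X M := Tmap s (fun a x => hsl (op a) x)
  let Tr : TM k A X M →+ TM k A Z M := Tmap r (fun a x => hrl (op a) x)
  have h1 : ∀ t, TmapL M φ (Ts t) = t := by
    intro t
    induction t using TM.induction with
    | h0 => simp
    | hm y m => exact congrArg (fun z => tmk k A z m) (hs y)
    | ha s t hs ht => rw [map_add, map_add, hs, ht]
  have h2 : ∀ t, Tr (TmapL M i t) = t := by
    intro t
    induction t using TM.induction with
    | h0 => simp
    | hm y m => exact congrArg (fun z => tmk k A z m) (hr y)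
    | ha s t hs ht => rw [map_add, map_add, hs, ht]
  have h3 : ∀ t, TmapL M i (Tr t) + Ts (TmapL M φ t) = t := by
    intro t
    induction t using TM.induction with
    | h0 => simp
    | hm y m =>
      exact (tmk_add_left k A _ _ m).symm.trans (congrArg (fun z => tmk k A z m) (hsr y))
    | ha s t hs ht =>
      rw [map_add, map_add, map_add, map_add, add_add_add_comm, hs, ht]
  have h4 : ∀ t, TmapL M φ (TmapL M i t) = 0 := by
    intro t
    induction t using TM.induction with
    | h0 => simp
    | hm y m => exact (congrArg (fun z => tmk k A z m) (h0 y)).trans (tmk_zero_left k A m)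
    | ha s t hs ht => rw [map_add, map_add, hs, ht, add_zero]
  refine ⟨Function.LeftInverse.injective h2, fun t => ⟨fun ht => ?_, ?_⟩, fun t => ⟨_, h1 t⟩⟩
  · have := h3 t
    rw [ht, map_zero, add_zero] at this
    exact ⟨_, this⟩
  · rintro ⟨t, rfl⟩
    exact h4 t

variable (M) in
lemma T_exact (i : Z →ₗ[A ⊗[k] Aᵐᵒᵖ] X) (φ : X →ₗ[A ⊗[k] Aᵐᵒᵖ] Y)
    (hi : Function.Injective i) (hex : Function.Exact i φ) (hφ : Function.Surjective φ)
    [Module.Projective Aᵐᵒᵖ (Rt k A Y)] :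
    Function.Injective (TmapL M i) ∧ Function.Exact (TmapL M i) (TmapL M φ) ∧
    Function.Surjective (TmapL M φ) := by
  obtain ⟨s, r, hsl, hrl, hs, hr, hsr⟩ := exists_retr i φ hi hex hφ
  exact T_exact_aux i φ s r hsl hrl hs hr hsr (fun x => (hex _).2 ⟨x, rfl⟩)

/-- `Rt` of a free module is projective. -/
lemma Rt_free (B : Type u) : Module.Projective Aᵐᵒᵖ (Rt k A (B →₀ A ⊗[k] Aᵐᵒᵖ)) := by
  let e : (B →₀ (Aᵐᵒᵖ ⊗[k] A)) ≃+ (B →₀ A ⊗[k] Aᵐᵒᵖ) :=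
    Finsupp.mapRange.addEquiv (TensorProduct.comm k Aᵐᵒᵖ A).toAddEquiv
  let e' : (B →₀ (Aᵐᵒᵖ ⊗[k] A)) ≃ₗ[Aᵐᵒᵖ] Rt k A (B →₀ A ⊗[k] Aᵐᵒᵖ) :=
    { e with
      map_smul' := fun b f => by
        change e (b • f) = ((1 : A) ⊗ₜ[k] b) • e f
        ext i
        change TensorProduct.comm k Aᵐᵒᵖ A (b • f i) =
          ((1 : A) ⊗ₜ[k] b) * TensorProduct.comm k Aᵐᵒᵖ A (f i)
        induction f i using TensorProduct.induction_on with
        | zero => simp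
        | tmul x y => simp [TensorProduct.smul_tmul']
        | add x y hx hy => rw [smul_add, map_add, map_add, hx, hy, mul_add] }
  exact Module.Projective.of_equiv' e'

end PartIII

section PartIV

open MulOpposite

variable {k A : Type u} [Field k] [Ring A] [Algebra k A]
variable {X Y Z M : Type u} [AddCommGroup X] [Module (A ⊗[k] Aᵐᵒᵖ) X]
  [AddCommGroup Y] [Module (A ⊗[k] Aᵐᵒᵖ) Y] [AddCommGroup Z] [Module (A ⊗[k] Aᵐᵒᵖ) Z]
  [AddCommGroup M] [Module A M]

noncomputable instance : Module k (TM k A X M) := Module.compHom _ (algebraMap k A)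

instance : IsScalarTower k A (TM k A X M) := ⟨fun c a t => by
  rw [Algebra.smul_def, mul_smul]; rfl⟩

lemma TM_k_smul (c : k) (t : TM k A X M) : c • t = (algebraMap k A c) • t := rfl

section free

variable [Module k M] [IsScalarTower k A M]

/-- right multiplication -/
def rmul (m : M) : Aᵐᵒᵖ →ₗ[k] M where
  toFun b := b.unop • m
  map_add' b c := by rw [MulOpposite.unop_add, add_smul]
  map_smul' c b := by rw [MulOpposite.unop_smul, smul_assoc]; rfl

/-- `a ⊗ b ↦ a ⊗ b m` -/
noncomputable def theta (m : M) : (A ⊗[k] Aᵐᵒᵖ) →ₗ[k] A ⊗[k] M :=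
  TensorProduct.map LinearMap.id (rmul m)

lemma theta_tmul (m : M) (a : A) (b : Aᵐᵒᵖ) : theta (k := k) m (a ⊗ₜ b) = a ⊗ₜ (b.unop • m) := rfl

lemma theta_add (m n : M) (r : A ⊗[k] Aᵐᵒᵖ) : theta (m + n) r = theta m r + theta n r := by
  induction r using TensorProduct.induction_on with
  | zero => simp
  | tmul a b => rw [theta_tmul, theta_tmul, theta_tmul, smul_add, TensorProduct.tmul_add]
  | add r s hr hs => rw [map_add, map_add, map_add, hr, hs]; abel

lemma theta_bal (m : M) (c : A) (r : A ⊗[k] Aᵐᵒᵖ) :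
    theta m (((1 : A) ⊗ₜ[k] op c) * r) = theta (c • m) r := by
  induction r using TensorProduct.induction_on with
  | zero => simp
  | tmul a b =>
    rw [Algebra.TensorProduct.tmul_mul_tmul, theta_tmul, theta_tmul, one_mul, smul_smul]; rfl
  | add r s hr hs => rw [mul_add, map_add, map_add, hr, hs]

lemma theta_left (m : M) (c : A) (r : A ⊗[k] Aᵐᵒᵖ) :
    theta m ((c ⊗ₜ[k] (1 : Aᵐᵒᵖ)) * r) = c • theta m r := by
  induction r using TensorProduct.induction_on with
  | zero => simp
  | tmul a b =>
    rw [Algebra.TensorProduct.tmul_mul_tmul, theta_tmul, theta_tmul, one_mul,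
      TensorProduct.smul_tmul', smul_eq_mul]
  | add r s hr hs => rw [mul_add, map_add, map_add, hr, hs, smul_add]

/-- embedding into a free module -/
noncomputable def freeI (B : Type u) :
    TM k A (B →₀ A ⊗[k] Aᵐᵒᵖ) M →ₗ[A] (B →₀ A ⊗[k] M) :=
  TM.toLin (TM.lift (biadd (X := B →₀ A ⊗[k] Aᵐᵒᵖ) (M := M)
      (fun f m => Finsupp.mapRange (theta m) (map_zero _) f)
      (fun f g m => Finsupp.mapRange_add (map_add _) f g)
      (fun f m n => by ext b; exact theta_add m n (f b)))
      (fun f c m => by ext b; exact theta_bal m c (f b)))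
    (fun a f m => by ext b; exact theta_left m a (f b))

lemma freeI_tmk (B : Type u) (f : B →₀ A ⊗[k] Aᵐᵒᵖ) (m : M) :
    freeI B (tmk k A f m) = Finsupp.mapRange (theta m) (map_zero _) f := rfl

/-- `m ↦ [x ⊗ m]`. -/
noncomputable def tmkL (x : X) : M →ₗ[k] TM k A X M where
  toFun m := tmk k A x m
  map_add' := tmk_add_right k A x
  map_smul' c m := by
    rw [← algebraMap_smul A c m, ← tmk_bal]
    change _ = tmk k A ((algebraMap k A c ⊗ₜ[k] (1 : Aᵐᵒᵖ)) • x) m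
    congr 2
    rw [Algebra.algebraMap_eq_smul_one, MulOpposite.op_smul, op_one,
      TensorProduct.smul_tmul]

/-- retraction -/
noncomputable def freeS (B : Type u) :
    (B →₀ A ⊗[k] M) →ₗ[A] TM k A (B →₀ A ⊗[k] Aᵐᵒᵖ) M :=
  Finsupp.lsum ℕ (fun b => TensorProduct.AlgebraTensorModule.lift
    (LinearMap.toSpanSingleton A (M →ₗ[k] TM k A (B →₀ A ⊗[k] Aᵐᵒᵖ) M)
      (tmkL (Finsupp.single b (1 : A ⊗[k] Aᵐᵒᵖ)))))

lemma freeS_single (B : Type u) (b : B) (a : A) (m : M) :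
    freeS B (Finsupp.single b (a ⊗ₜ[k] m)) =
      a • tmk k A (Finsupp.single b (1 : A ⊗[k] Aᵐᵒᵖ)) m := by
  unfold freeS
  rw [Finsupp.lsum_single]
  rfl

lemma freeSI (B : Type u) (t : TM k A (B →₀ A ⊗[k] Aᵐᵒᵖ) M) : freeS B (freeI B t) = t := by
  induction t using TM.induction with
  | h0 => rw [map_zero, map_zero]
  | ha s t hs ht => rw [map_add, map_add, hs, ht]
  | hm f m =>
    induction f using Finsupp.induction_linear with
    | zero => rw [tmk_zero_left, map_zero, map_zero]
    | add f g hf hg => rw [tmk_add_left, map_add, map_add, hf, hg]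
    | single b r =>
      induction r using TensorProduct.induction_on with
      | zero => rw [Finsupp.single_zero, tmk_zero_left, map_zero, map_zero]
      | add r s hr hs => rw [Finsupp.single_add, tmk_add_left, map_add, map_add, hr, hs]
      | tmul a c =>
        rw [freeI_tmk, Finsupp.mapRange_single, theta_tmul, freeS_single, ← tmk_bal, smul_tmk,
          ← lr_eq, Finsupp.smul_single, smul_eq_mul, mul_one, op_unop]

lemma T_free' (B : Type u) : Module.Projective A (TM k A (B →₀ A ⊗[k] Aᵐᵒᵖ) M) :=
  Module.Projective.of_split (freeI B) (freeS B) (LinearMap.ext (freeSI B))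

end free

variable (M) in
lemma T_free (B : Type u) : Module.Projective A (TM k A (B →₀ A ⊗[k] Aᵐᵒᵖ) M) := by
  letI : Module k M := Module.compHom _ (algebraMap k A)
  haveI : IsScalarTower k A M := ⟨fun c a t => by rw [Algebra.smul_def, mul_smul]; rfl⟩
  exact T_free' B

variable (M) in
lemma T_projective [Module.Projective (A ⊗[k] Aᵐᵒᵖ) X] : Module.Projective A (TM k A X M) := by
  obtain ⟨s, hs⟩ := Module.Projective.out (R := A ⊗[k] Aᵐᵒᵖ) (P := X)
  haveI := T_free (k := k) (A := A) M X
  refine Module.Projective.of_split (TmapL (Y := X →₀ A ⊗[k] Aᵐᵒᵖ) M s)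
    (TmapL (X := X →₀ A ⊗[k] Aᵐᵒᵖ) M (Finsupp.linearCombination (A ⊗[k] Aᵐᵒᵖ) id)) (LinearMap.ext fun t => ?_)
  induction t using TM.induction with
  | h0 => simp
  | hm y m => exact congrArg (fun z => tmk k A z m) (hs y)
  | ha s t hs ht => rw [map_add, hs, ht, map_add]

lemma Rt_projective [Module.Projective (A ⊗[k] Aᵐᵒᵖ) X] :
    Module.Projective Aᵐᵒᵖ (Rt k A X) := by
  obtain ⟨s, hs⟩ := Module.Projective.out (R := A ⊗[k] Aᵐᵒᵖ) (P := X)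
  haveI := Rt_free (k := k) (A := A) X
  exact Module.Projective.of_split (Rtmap (Y := X →₀ A ⊗[k] Aᵐᵒᵖ) s)
    (Rtmap (X := X →₀ A ⊗[k] Aᵐᵒᵖ) (Finsupp.linearCombination (A ⊗[k] Aᵐᵒᵖ) id)) (LinearMap.ext hs)

lemma env_smul (a : A) (b : Aᵐᵒᵖ) (x : A) : (a ⊗ₜ[k] b) • x = a * x * b.unop := by
  refine (TensorProduct.Algebra.smul_def a b x).trans ?_
  rw [smul_eq_mul, mul_assoc]; rfl

variable (k A) in
lemma Rt_self : Module.Projective Aᵐᵒᵖ (Rt k A A) := by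
  let e : Aᵐᵒᵖ ≃ₗ[Aᵐᵒᵖ] Rt k A A :=
    { (opAddEquiv (α := A)).symm with
      map_smul' := fun b x => by
        change (b * x).unop = ((1 : A) ⊗ₜ[k] b) • x.unop
        rw [env_smul, one_mul, unop_mul] }
  exact Module.Projective.of_equiv' e

variable (k M) in
/-- `A ⊗_A M = M` -/
noncomputable def TA : TM k A A M ≃ₗ[A] M :=
  LinearEquiv.ofLinearMap
    (TM.toLin (TM.lift (biadd (X := A) (M := M) (fun a m => a • m) (fun _ _ _ => add_smul _ _ _)
      (fun _ _ _ => smul_add _ _ _)) (fun x a m => by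
        simp only [biadd_apply]
        rw [env_smul, one_mul, mul_smul]; rfl))
      (fun a x m => by
        simp only [TM.lift_tmk, biadd_apply]
        rw [env_smul, unop_one, mul_one, mul_smul]))
    { toFun := fun m => tmk k A (1 : A) m
      map_add' := tmk_add_right k A 1
      map_smul' := fun a m => by
        rw [← tmk_bal, RingHom.id_apply, smul_tmk, env_smul, env_smul]; simp }
    (LinearMap.ext fun m => one_smul A m)
    (LinearMap.ext fun t => by
      induction t using TM.induction with
      | h0 => rw [map_zero, map_zero]
      | ha s t hs ht => rw [map_add, hs, ht, map_add]
      | hm x m =>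
        change tmk k A 1 (x • m) = tmk k A x m
        rw [← tmk_bal, env_smul]; simp)

end PartIV

section PartV

open MulOpposite

lemma hpd_shift {R : Type u} [Ring R] {K F X : Type u} [AddCommGroup K] [AddCommGroup F]
    [AddCommGroup X] [Module R K] [Module R F] [Module R X] [Module.Projective R F]
    (i : K →ₗ[R] F) (φ : F →ₗ[R] X) (hi : Function.Injective i) (hex : Function.Exact i φ)
    (hφ : Function.Surjective φ) (n : ℕ) :
    HasProjectiveDimensionLT (ModuleCat.of R X) (n + 2) ↔
      HasProjectiveDimensionLT (ModuleCat.of R K) (n + 1) := by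
  let S : ShortComplex (ModuleCat.{u} R) := ShortComplex.mk (ModuleCat.ofHom i) (ModuleCat.ofHom φ)
    (by ext x; exact (hex _).2 ⟨x, rfl⟩)
  have hS : S.ShortExact := ModuleCat.shortComplex_shortExact S hex hi hφ
  exact hS.hasProjectiveDimensionLT_X₃_iff n
    ((IsProjective.iff_projective F).1 inferInstance)

lemma hpd_one {R : Type u} [Ring R] {X : Type u} [AddCommGroup X] [Module R X] :
    HasProjectiveDimensionLT (ModuleCat.of R X) 1 ↔ Module.Projective R X :=
  projective_iff_hasProjectiveDimensionLT_one.symm.trans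
    (IsProjective.iff_projective X).symm

lemma cover' {k R : Type u} [Field k] [Ring R] [Algebra k R] {𝒢 : ℕ → Set R} {η : R →ₐ[k] k}
    (G : GrRing 𝒢 η) {X : Type u} [AddCommGroup X] [Module R X] (g : Gr 𝒢 X) :
    ∃ (B K : Type u) (_ : AddCommGroup K) (_ : Module R K) (i : K →ₗ[R] (B →₀ R))
      (φ : (B →₀ R) →ₗ[R] X), Function.Injective i ∧ Function.Exact i φ ∧
      Function.Surjective φ ∧ (∀ x b, η (i x b) = 0) ∧ Nonempty (Gr 𝒢 K) := by
  obtain ⟨B, φ, h1, h2, h3⟩ := cover G g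
  exact ⟨B, LinearMap.ker φ, inferInstance, inferInstance, (LinearMap.ker φ).subtype, φ,
    Subtype.val_injective, LinearMap.exact_subtype_ker_map φ, h1, fun x b => h2 x.1 x.2 b, h3⟩

lemma freeCover (R : Type u) [Ring R] (X : Type u) [AddCommGroup X] [Module R X] :
    ∃ (K : Type u) (_ : AddCommGroup K) (_ : Module R K) (i : K →ₗ[R] (X →₀ R))
      (φ : (X →₀ R) →ₗ[R] X), Function.Injective i ∧ Function.Exact i φ ∧
      Function.Surjective φ :=
  ⟨LinearMap.ker (Finsupp.linearCombination R (id : X → X)), inferInstance, inferInstance,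
    Submodule.subtype _, Finsupp.linearCombination R (id : X → X),
    Subtype.val_injective, LinearMap.exact_subtype_ker_map _,
    Finsupp.linearCombination_id_surjective R X⟩

lemma splitting_aux {R P Q N : Type*} [Ring R] [AddCommGroup P] [AddCommGroup Q] [AddCommGroup N]
    [Module R P] [Module R Q] [Module R N] {f : P →ₗ[R] Q} {g : Q →ₗ[R] N}
    (hf : Function.Injective f) (h : Function.Exact f g) (s : N →ₗ[R] Q)
    (hs : g ∘ₗ s = LinearMap.id) : ∃ ρ : Q →ₗ[R] P, ρ ∘ₗ f = LinearMap.id := by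
  have := (((Function.Exact.split_tfae' h).out 0 1 :
    (Function.Injective f ∧ ∃ l, g ∘ₗ l = LinearMap.id) ↔
    (Function.Surjective g ∧ ∃ l, l ∘ₗ f = LinearMap.id))).1 ⟨hf, s, hs⟩
  exact this.2

variable {k A : Type u} [Field k] [Ring A] [Algebra k A]

lemma T1 (M : Type u) [AddCommGroup M] [Module A M] (n : ℕ) :
    ∀ (X : Type u) [AddCommGroup X] [Module (A ⊗[k] Aᵐᵒᵖ) X] [Module.Projective Aᵐᵒᵖ (Rt k A X)],
    HasProjectiveDimensionLT (ModuleCat.of (A ⊗[k] Aᵐᵒᵖ) X) (n + 1) →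
      HasProjectiveDimensionLT (ModuleCat.of A (TM k A X M)) (n + 1) := by
  induction n with
  | zero =>
    intro X _ _ _ h
    have := hpd_one.1 h
    exact hpd_one.2 (T_projective M)
  | succ n ih =>
    intro X _ _ _ h
    obtain ⟨K, _, _, i, φ, hi, hex, hφ⟩ := freeCover (A ⊗[k] Aᵐᵒᵖ) X
    have hRt : Module.Projective Aᵐᵒᵖ (Rt k A (X →₀ A ⊗[k] Aᵐᵒᵖ)) := Rt_free X
    have hK : Module.Projective Aᵐᵒᵖ (Rt k A K) := Rt_ker_projective (X := X →₀ A ⊗[k] Aᵐᵒᵖ) i φ hi hex hφ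
    have h1 := ih K ((hpd_shift (F := X →₀ A ⊗[k] Aᵐᵒᵖ) i φ hi hex hφ n).1 h)
    obtain ⟨t1, t2, t3⟩ := T_exact (X := X →₀ A ⊗[k] Aᵐᵒᵖ) M i φ hi hex hφ
    have := T_free (k := k) (A := A) M X
    exact (hpd_shift (TmapL (Y := X →₀ A ⊗[k] Aᵐᵒᵖ) M i) (TmapL (X := X →₀ A ⊗[k] Aᵐᵒᵖ) M φ) t1 t2 t3 n).2 h1

lemma pd_le_of_env (M : Type u) [AddCommGroup M] [Module A M] (n : ℕ)
    (h : HasProjectiveDimensionLT (ModuleCat.of (A ⊗[k] Aᵐᵒᵖ) A) (n + 1)) :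
    HasProjectiveDimensionLT (ModuleCat.of A M) (n + 1) := by
  have := Rt_self k A
  have := T1 M n A h
  exact hasProjectiveDimensionLT_of_iso (TA k M).toModuleIso (n + 1)

section T2

variable [Module A k] {ε : A →ₐ[k] k} {η : (A ⊗[k] Aᵐᵒᵖ) →ₐ[k] k}

lemma aug_step
    (hsmul : ∀ (a : A) (c : k), a • c = ε a * c) (hη : ∀ a b, η (a ⊗ₜ b) = ε a * ε b.unop)
    {Y : Type u} [AddCommGroup Y] [Module (A ⊗[k] Aᵐᵒᵖ) Y]
    (r : A ⊗[k] Aᵐᵒᵖ) (y : Y) (c : k) :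
    tmk k A (r • y) c - tmk k A (algebraMap k (A ⊗[k] Aᵐᵒᵖ) (η r) • y) c ∈
      Jsub ε (TM k A Y k) := by
  induction r using TensorProduct.induction_on with
  | zero =>
    rw [map_zero, map_zero]
    have : tmk k A ((0 : A ⊗[k] Aᵐᵒᵖ) • y) c - tmk k A ((0 : A ⊗[k] Aᵐᵒᵖ) • y) c = 0 :=
      sub_self _
    exact this ▸ zero_mem _
  | add r s hr hs =>
    have := add_mem hr hs
    rw [add_smul, map_add, map_add, add_smul, tmk_add_left, tmk_add_left]
    convert this using 1
    abel
  | tmul a b =>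
    have h1 : algebraMap k (A ⊗[k] Aᵐᵒᵖ) (η (a ⊗ₜ b)) =
        (algebraMap k A (ε a)) ⊗ₜ[k] op (algebraMap k A (ε b.unop)) := by
      rw [hη, Algebra.TensorProduct.algebraMap_apply, Algebra.algebraMap_eq_smul_one,
        Algebra.algebraMap_eq_smul_one, Algebra.algebraMap_eq_smul_one, MulOpposite.op_smul, op_one,
        ← TensorProduct.smul_tmul, smul_smul, mul_comm]
    have h2 : ∀ (a b : A), tmk k A ((a ⊗ₜ[k] op b) • y) c = a • tmk k A y (ε b * c) := by
      intro a b
      rw [lr_eq, ← smul_tmk, tmk_bal, hsmul]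
    have h3 := h2 a b.unop
    rw [op_unop] at h3
    rw [h1, h3, h2, AlgHom.commutes, Algebra.algebraMap_self, RingHom.id_apply, ← sub_smul]
    exact smul_mem_Jsub _ _ (by simp)

lemma aug_free
    (hsmul : ∀ (a : A) (c : k), a • c = ε a * c) (hη : ∀ a b, η (a ⊗ₜ b) = ε a * ε b.unop)
    {B : Type u} (f : B →₀ A ⊗[k] Aᵐᵒᵖ) (hf : ∀ b, η (f b) = 0) (c : k) :
    tmk k A f c ∈ Jsub ε (TM k A (B →₀ A ⊗[k] Aᵐᵒᵖ) k) := by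
  have key : ∀ b, tmk k A (Finsupp.single b (f b)) c ∈
      Jsub ε (TM k A (B →₀ A ⊗[k] Aᵐᵒᵖ) k) := by
    intro b
    have := aug_step hsmul hη (f b) (Finsupp.single b (1 : A ⊗[k] Aᵐᵒᵖ)) c
    have h0 : algebraMap k (A ⊗[k] Aᵐᵒᵖ) (η (f b)) • Finsupp.single b (1 : A ⊗[k] Aᵐᵒᵖ) = 0 := by
      rw [hf, map_zero, Finsupp.smul_single, smul_eq_mul, zero_mul, Finsupp.single_zero]
    rw [h0, tmk_zero_left, sub_zero, Finsupp.smul_single, smul_eq_mul, mul_one] at this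
    exact this
  let T : (B →₀ A ⊗[k] Aᵐᵒᵖ) →+ TM k A (B →₀ A ⊗[k] Aᵐᵒᵖ) k :=
    AddMonoidHom.mk' (fun g => tmk k A g c) (fun g h => tmk_add_left k A g h c)
  have h2 : tmk k A f c = ∑ b ∈ f.support, T (Finsupp.single b (f b)) := by
    rw [← map_sum]
    exact congrArg T f.sum_single.symm
  rw [h2]
  exact sum_mem fun b _ => key b

/-- `[x ⊗ c] ↦ c x` -/
lemma exists_tau
    (hsmul : ∀ (a : A) (c : k), a • c = ε a * c) (hη : ∀ a b, η (a ⊗ₜ b) = ε a * ε b.unop)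
    (K : Type u) [AddCommGroup K] [Module (A ⊗[k] Aᵐᵒᵖ) K] :
    ∃ τ : TM k A K k →+ (K ⧸ Jsub η K), (∀ x, τ (tmk k A x 1) = Submodule.Quotient.mk x) ∧
      ∀ t ∈ Jsub ε (TM k A K k), τ t = 0 := by
  let f : K →+ k →+ (K ⧸ Jsub η K) := biadd (X := K) (M := k)
    (fun x c => Submodule.Quotient.mk (algebraMap k (A ⊗[k] Aᵐᵒᵖ) c • x))
    (fun x y c => by rw [smul_add]; rfl) (fun x c d => by rw [map_add, add_smul]; rfl)
  have hf : ∀ x c, f x c = Submodule.Quotient.mk (algebraMap k (A ⊗[k] Aᵐᵒᵖ) c • x) :=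
    fun _ _ => rfl
  have hbal : ∀ (x : K) (a : A) (c : k), f (((1 : A) ⊗ₜ[k] op a) • x) c = f x (a • c) := by
    intro x a c
    rw [hf, hf, hsmul, Submodule.Quotient.eq, smul_smul, ← sub_smul]
    refine smul_mem_Jsub _ _ ?_
    rw [map_sub, map_mul, AlgHom.commutes, AlgHom.commutes, hη]
    simp [mul_comm]
  refine ⟨TM.lift f hbal, fun x => ?_, ?_⟩
  · rw [TM.lift_tmk, hf, map_one, one_smul]
  · intro t ht
    refine Jsub_induction (TM.lift f hbal).ker ?_ t ht
    intro a t ha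
    rw [AddMonoidHom.mem_ker]
    induction t using TM.induction with
    | h0 => rw [smul_zero, map_zero]
    | ha s t hs ht => rw [smul_add, map_add, hs, ht, add_zero]
    | hm x c =>
      rw [smul_tmk, TM.lift_tmk, hf, Submodule.Quotient.mk_eq_zero, smul_smul]
      refine smul_mem_Jsub _ _ ?_
      rw [map_mul, hη, ha, zero_mul, mul_zero]

lemma T2
    (hsmul : ∀ (a : A) (c : k), a • c = ε a * c) (hη : ∀ a b, η (a ⊗ₜ b) = ε a * ε b.unop)
    {𝒢 : ℕ → Set (A ⊗[k] Aᵐᵒᵖ)} (G : GrRing 𝒢 η) (n : ℕ) :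
    ∀ (X : Type u) [AddCommGroup X] [Module (A ⊗[k] Aᵐᵒᵖ) X] [Module.Projective Aᵐᵒᵖ (Rt k A X)]
      (_ : Gr 𝒢 X), HasProjectiveDimensionLT (ModuleCat.of A (TM k A X k)) (n + 1) →
      HasProjectiveDimensionLT (ModuleCat.of (A ⊗[k] Aᵐᵒᵖ) X) (n + 1) := by
  induction n with
  | zero =>
    intro X _ _ _ g h
    have hTX := hpd_one.1 h
    obtain ⟨B, K, _, _, i, φ, hi, hex, hφ, hmin, ⟨gK⟩⟩ := cover' G g
    obtain ⟨t1, t2, t3⟩ := T_exact (X := B →₀ A ⊗[k] Aᵐᵒᵖ) k i φ hi hex hφ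
    obtain ⟨s, hs⟩ := Module.projective_lifting_property (TmapL (X := B →₀ A ⊗[k] Aᵐᵒᵖ) k φ) LinearMap.id t3
    obtain ⟨ρ, hρ⟩ : ∃ ρ : TM k A (B →₀ A ⊗[k] Aᵐᵒᵖ) k →ₗ[A] TM k A K k,
        ρ ∘ₗ TmapL (Y := B →₀ A ⊗[k] Aᵐᵒᵖ) k i = LinearMap.id :=
      (splitting_aux t1 t2 s hs)
    obtain ⟨τ, hτ1, hτ2⟩ := exists_tau hsmul hη K
    have hJ : Jsub η K = ⊤ := by
      rw [eq_top_iff]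
      intro x _
      rw [← Submodule.Quotient.mk_eq_zero, ← hτ1]
      have h1 : tmk k A x 1 = ρ (tmk k A (i x) 1) := (LinearMap.congr_fun hρ (tmk k A x 1)).symm
      rw [h1]
      refine Jsub_induction (τ.comp ρ.toAddMonoidHom).ker ?_ _
        (aug_free hsmul hη (i x) (hmin x) 1)
      intro a t ha
      change τ (ρ (a • t)) = 0
      rw [map_smul]
      exact hτ2 _ (smul_mem_Jsub _ _ ha)
    have h0 : ∀ x : K, x = 0 := nakayama G gK hJ
    have hinj : Function.Injective φ := by
      rw [injective_iff_map_eq_zero]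
      intro y hy
      obtain ⟨x, rfl⟩ := (hex y).1 hy
      rw [h0 x, map_zero]
    exact hpd_one.2 (Module.Projective.of_equiv' (LinearEquiv.ofBijective φ ⟨hinj, hφ⟩))
  | succ n ih =>
    intro X _ _ _ g h
    obtain ⟨B, K, _, _, i, φ, hi, hex, hφ, hmin, ⟨gK⟩⟩ := cover' G g
    have hRt : Module.Projective Aᵐᵒᵖ (Rt k A (B →₀ A ⊗[k] Aᵐᵒᵖ)) := Rt_free B
    have hK : Module.Projective Aᵐᵒᵖ (Rt k A K) := Rt_ker_projective (X := B →₀ A ⊗[k] Aᵐᵒᵖ) i φ hi hex hφ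
    obtain ⟨t1, t2, t3⟩ := T_exact (X := B →₀ A ⊗[k] Aᵐᵒᵖ) k i φ hi hex hφ
    have := T_free (k := k) (A := A) k B
    have h1 := ih K gK ((hpd_shift (TmapL (Y := B →₀ A ⊗[k] Aᵐᵒᵖ) k i) (TmapL (X := B →₀ A ⊗[k] Aᵐᵒᵖ) k φ) t1 t2 t3 n).1 h)
    exact (hpd_shift (F := B →₀ A ⊗[k] Aᵐᵒᵖ) i φ hi hex hφ n).2 h1

end T2

end PartV

section PartVI

open MulOpposite

variable {k A : Type u} [Field k] [Ring A] [Algebra k A] (𝒜 : ℕ → Submodule k A) [GradedAlgebra 𝒜]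

/-- projections -/
noncomputable def Pj (n : ℕ) : A →ₗ[k] A := GradedAlgebra.proj 𝒜 n

lemma Pj_of_mem {i : ℕ} {a : A} (ha : a ∈ 𝒜 i) (n : ℕ) : Pj 𝒜 n a = if i = n then a else 0 := by
  unfold Pj
  rw [GradedAlgebra.proj_apply]
  split_ifs with h
  · subst h; exact DirectSum.decompose_of_mem_same 𝒜 ha
  · exact DirectSum.decompose_of_mem_ne 𝒜 ha h

lemma hom_induction {P : A → Prop} (h0 : P 0) (hm : ∀ i, ∀ a ∈ 𝒜 i, P a)
    (hadd : ∀ a b, P a → P b → P (a + b)) (a : A) : P a :=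
  DirectSum.Decomposition.inductionOn 𝒜 h0 (fun {i} m => hm i m.1 m.2) hadd a

lemma tens_induction {P : (A ⊗[k] Aᵐᵒᵖ) → Prop} (h0 : P 0)
    (hm : ∀ i j, ∀ a ∈ 𝒜 i, ∀ b ∈ 𝒜 j, P (a ⊗ₜ op b))
    (hadd : ∀ a b, P a → P b → P (a + b)) (r : A ⊗[k] Aᵐᵒᵖ) : P r := by
  induction r using TensorProduct.induction_on with
  | zero => exact h0
  | add r s hr hs => exact hadd _ _ hr hs
  | tmul a b =>
    obtain ⟨b, rfl⟩ := op_surjective b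
    induction a using hom_induction 𝒜 with
    | h0 => rw [TensorProduct.zero_tmul]; exact h0
    | hadd a a' h h' => rw [TensorProduct.add_tmul]; exact hadd _ _ h h'
    | hm i a ha =>
      induction b using hom_induction 𝒜 with
      | h0 => rw [MulOpposite.op_zero, TensorProduct.tmul_zero]; exact h0
      | hadd a a' h h' => rw [MulOpposite.op_add, TensorProduct.tmul_add]; exact hadd _ _ h h'
      | hm j b hb => exact hm i j a ha b hb

/-- homogeneous pure tensors -/
def GG (n : ℕ) : Set (A ⊗[k] Aᵐᵒᵖ) :=
  {r | ∃ i j a b, a ∈ 𝒜 i ∧ b ∈ 𝒜 j ∧ i + j = n ∧ r = a ⊗ₜ op b}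

/-- projections on the opposite -/
noncomputable def Pop (n : ℕ) : Aᵐᵒᵖ →ₗ[k] Aᵐᵒᵖ :=
  (opLinearEquiv k).toLinearMap ∘ₗ Pj 𝒜 n ∘ₗ (opLinearEquiv k).symm.toLinearMap

lemma Pop_op (n : ℕ) (b : A) : Pop 𝒜 n (op b) = op (Pj 𝒜 n b) := rfl

/-- projections on the tensor product -/
noncomputable def qq (n : ℕ) : (A ⊗[k] Aᵐᵒᵖ) →ₗ[k] (A ⊗[k] Aᵐᵒᵖ) :=
  ∑ ij ∈ Finset.HasAntidiagonal.antidiagonal n, TensorProduct.map (Pj 𝒜 ij.1) (Pop 𝒜 ij.2)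

lemma qq_tmul {i j : ℕ} {a b : A} (ha : a ∈ 𝒜 i) (hb : b ∈ 𝒜 j) (n : ℕ) :
    qq 𝒜 n (a ⊗ₜ op b) = if i + j = n then a ⊗ₜ op b else 0 := by
  unfold qq
  rw [LinearMap.sum_apply]
  have h : ∀ x ∈ Finset.HasAntidiagonal.antidiagonal n,
      TensorProduct.map (Pj 𝒜 x.1) (Pop 𝒜 x.2) (a ⊗ₜ[k] op b) =
        if x = (i, j) then a ⊗ₜ[k] op b else 0 := by
    rintro ⟨x, y⟩ _
    rw [TensorProduct.map_tmul, Pop_op, Pj_of_mem 𝒜 ha, Pj_of_mem 𝒜 hb]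
    by_cases h1 : i = x
    · by_cases h2 : j = y
      · simp [h1, h2]
      · have : ¬ y = j := fun h => h2 h.symm
        simp [h2, this]
    · have : ¬ x = i := fun h => h1 h.symm
      simp [h1, this]
  rw [Finset.sum_congr rfl h, Finset.sum_ite_eq']
  simp [Finset.HasAntidiagonal.mem_antidiagonal]

/-- grading of the enveloping algebra -/
noncomputable def grEnv : Gr (GG 𝒜) (A ⊗[k] Aᵐᵒᵖ) where
  p n := (qq 𝒜 n).toAddMonoidHom
  sum x := by
    change ∃ N, ∀ M ≥ N, ∑ i ∈ Finset.range M, qq 𝒜 i x = x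
    induction x using tens_induction 𝒜 with
    | h0 => exact ⟨0, by simp⟩
    | hadd f g hf hg =>
      obtain ⟨N, hN⟩ := hf
      obtain ⟨N', hN'⟩ := hg
      refine ⟨max N N', fun M hM => ?_⟩
      simp only [map_add, Finset.sum_add_distrib]
      rw [hN M (le_trans (le_max_left _ _) hM), hN' M (le_trans (le_max_right _ _) hM)]
    | hm i j a ha b hb =>
      refine ⟨i + j + 1, fun M hM => ?_⟩
      simp only [qq_tmul 𝒜 ha hb]
      rw [Finset.sum_ite_eq, if_pos (Finset.mem_range.2 (by omega))]
  orth i j x := by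
    change qq 𝒜 i (qq 𝒜 j x) = if i = j then qq 𝒜 j x else 0
    induction x using tens_induction 𝒜 with
    | h0 => simp
    | hadd f g hf hg => simp only [map_add, hf, hg]; split_ifs <;> simp
    | hm i' j' a ha b hb =>
      rw [qq_tmul 𝒜 ha hb]
      by_cases h : i' + j' = j
      · rw [if_pos h, qq_tmul 𝒜 ha hb, h]
        simp only [eq_comm]
      · rw [if_neg h, map_zero]; simp
  smul := by
    rintro m _ ⟨i, j, a, b, ha, hb, rfl, rfl⟩ n x
    change qq 𝒜 n ((a ⊗ₜ[k] op b) * x) =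
      if i + j ≤ n then (a ⊗ₜ[k] op b) * qq 𝒜 (n - (i + j)) x else 0
    induction x using tens_induction 𝒜 with
    | h0 => simp
    | hadd f g hf hg => simp only [mul_add, map_add, hf, hg]; split_ifs <;> simp
    | hm i' j' a' ha' b' hb' =>
      rw [Algebra.TensorProduct.tmul_mul_tmul, ← op_mul,
        qq_tmul 𝒜 (SetLike.mul_mem_graded ha ha') (SetLike.mul_mem_graded hb' hb),
        qq_tmul 𝒜 ha' hb']
      by_cases h : i + i' + (j' + j) = n
      · rw [if_pos h, if_pos (by omega), if_pos (by omega), Algebra.TensorProduct.tmul_mul_tmul,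
          op_mul]
      · rw [if_neg h]
        split_ifs with h1 h2
        · omega
        · rw [mul_zero]
        · rfl

/-- grading of the algebra as a bimodule -/
noncomputable def grSelf : Gr (GG 𝒜) A where
  p n := (Pj 𝒜 n).toAddMonoidHom
  sum x := by
    change ∃ N, ∀ M ≥ N, ∑ i ∈ Finset.range M, Pj 𝒜 i x = x
    induction x using hom_induction 𝒜 with
    | h0 => exact ⟨0, by simp⟩
    | hadd f g hf hg =>
      obtain ⟨N, hN⟩ := hf
      obtain ⟨N', hN'⟩ := hg
      refine ⟨max N N', fun M hM => ?_⟩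
      simp only [map_add, Finset.sum_add_distrib]
      rw [hN M (le_trans (le_max_left _ _) hM), hN' M (le_trans (le_max_right _ _) hM)]
    | hm i a ha =>
      refine ⟨i + 1, fun M hM => ?_⟩
      simp only [Pj_of_mem 𝒜 ha]
      rw [Finset.sum_ite_eq, if_pos (Finset.mem_range.2 (by omega))]
  orth i j x := by
    change Pj 𝒜 i (Pj 𝒜 j x) = if i = j then Pj 𝒜 j x else 0
    induction x using hom_induction 𝒜 with
    | h0 => simp
    | hadd f g hf hg => simp only [map_add, hf, hg]; split_ifs <;> simp
    | hm i' a ha =>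
      rw [Pj_of_mem 𝒜 ha]
      by_cases h : i' = j
      · rw [if_pos h, Pj_of_mem 𝒜 ha, h]
        simp only [eq_comm]
      · rw [if_neg h, map_zero]; simp
  smul := by
    rintro m _ ⟨i, j, a, b, ha, hb, rfl, rfl⟩ n x
    change Pj 𝒜 n ((a ⊗ₜ[k] op b) • x) =
      if i + j ≤ n then (a ⊗ₜ[k] op b) • Pj 𝒜 (n - (i + j)) x else 0
    rw [env_smul, env_smul, unop_op]
    induction x using hom_induction 𝒜 with
    | h0 => simp
    | hadd f g hf hg => simp only [mul_add, add_mul, map_add, hf, hg]; split_ifs <;> simp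
    | hm l x hx =>
      rw [Pj_of_mem 𝒜 (SetLike.mul_mem_graded (SetLike.mul_mem_graded ha hx) hb),
        Pj_of_mem 𝒜 hx]
      by_cases h : i + l + j = n
      · rw [if_pos h, if_pos (by omega), if_pos (by omega)]
      · rw [if_neg h]
        split_ifs with h1 h2
        · omega
        · simp
        · rfl

/-- augmentation of the enveloping algebra -/
noncomputable def etaEnv (ε : A →ₐ[k] k) : (A ⊗[k] Aᵐᵒᵖ) →ₐ[k] k :=
  Algebra.TensorProduct.lift ε (AlgHom.fromOpposite ε (fun _ _ => Commute.all _ _))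
    (fun _ _ => Commute.all _ _)

lemma etaEnv_tmul (ε : A →ₐ[k] k) (a : A) (b : Aᵐᵒᵖ) :
    etaEnv ε (a ⊗ₜ b) = ε a * ε b.unop := by
  unfold etaEnv
  rw [Algebra.TensorProduct.lift_tmul]; rfl

lemma grRing_env (hconn : 𝒜 0 = (1 : Submodule k A)) (ε : A →ₐ[k] k)
    (hpos : ∀ i, 0 < i → ∀ a ∈ 𝒜 i, ε a = 0) : Nonempty (GrRing (GG 𝒜) (etaEnv ε)) := by
  have hz : ∀ a ∈ 𝒜 0, a = algebraMap k A (ε a) := by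
    intro a ha
    rw [hconn, Submodule.mem_one] at ha
    obtain ⟨c, rfl⟩ := ha
    rw [AlgHom.commutes]; rfl
  refine ⟨{ q := grEnv 𝒜, mem := ?_, self := ?_, zero := ?_, alg := ?_, pos := ?_ }⟩
  · intro n r
    change qq 𝒜 n r ∈ _
    induction r using tens_induction 𝒜 with
    | h0 => rw [map_zero]; exact zero_mem _
    | hadd f g hf hg => rw [map_add]; exact add_mem hf hg
    | hm i j a ha b hb =>
      rw [qq_tmul 𝒜 ha hb]
      split_ifs with h
      · exact AddSubgroup.subset_closure ⟨i, j, a, b, ha, hb, h, rfl⟩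
      · exact zero_mem _
  · rintro n _ ⟨i, j, a, b, ha, hb, h, rfl⟩
    exact (qq_tmul 𝒜 ha hb n).trans (if_pos h)
  · rintro _ ⟨i, j, a, b, ha, hb, h, rfl⟩
    obtain rfl : i = 0 := by omega
    obtain rfl : j = 0 := by omega
    rw [etaEnv_tmul, unop_op]
    conv_lhs => rw [hz a ha, hz b hb]
    rw [Algebra.TensorProduct.algebraMap_apply, Algebra.algebraMap_eq_smul_one,
        Algebra.algebraMap_eq_smul_one, Algebra.algebraMap_eq_smul_one, MulOpposite.op_smul, op_one,
        ← TensorProduct.smul_tmul, smul_smul, mul_comm]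
  · intro c
    refine ⟨0, 0, algebraMap k A c, 1, ?_, SetLike.one_mem_graded 𝒜, rfl, ?_⟩
    · rw [hconn]; exact Submodule.mem_one.2 ⟨c, rfl⟩
    · rw [op_one]; exact Algebra.TensorProduct.algebraMap_apply c
  · rintro n _ ⟨i, j, a, b, ha, hb, h, rfl⟩ hn
    rw [etaEnv_tmul, unop_op]
    rcases Nat.eq_zero_or_pos i with rfl | hi
    · rw [hpos j (by omega) b hb, mul_zero]
    · rw [hpos i hi a ha, zero_mul]

end PartVI

lemma le_of_forall_nat {a b : ℕ∞} (h : ∀ n : ℕ, b ≤ n → a ≤ n) : a ≤ b := by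
  induction b using ENat.recTopCoe with
  | top => exact le_top
  | coe n => exact h n le_rfl

set_option synthInstance.maxHeartbeats 1000000 in
set_option maxHeartbeats 1000000 in
/-- Lemma 4.3(b): for a connected graded `k`-algebra `A` (with grading `𝒜`,
`𝒜 0 = k·1`, and augmentation `ε` whose kernel is the augmentation ideal `A_{≥1}`),
the projective dimension of `A` as a left `A^e`-module equals the projective dimension of the
trivial module `k` as a left `A`-module, and the latter equals the global dimension of `A`. -/
theorem stmt_9 (k : Type u) [Field k] (A : Type u) [Ring A] [Algebra k A]
    (𝒜 : ℕ → Submodule k A) [GradedAlgebra 𝒜]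
    (hconn : 𝒜 0 = (1 : Submodule k A))
    (ε : A →ₐ[k] k)
    (hker : RingHom.ker ε.toRingHom = Ideal.span {x : A | ∃ i, 0 < i ∧ x ∈ 𝒜 i})
    [Module A k] (hsmul : ∀ (a : A) (c : k), a • c = ε a * c) :
    ModuleCat.projDim (ModuleCat.of (A ⊗[k] Aᵐᵒᵖ) A) = ModuleCat.projDim (ModuleCat.of A k) ∧
      ModuleCat.projDim (ModuleCat.of A k) = Ring.globalDim A := by
  have hpos : ∀ i, 0 < i → ∀ a ∈ 𝒜 i, ε a = 0 := by
    intro i hi a ha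
    have : a ∈ RingHom.ker ε.toRingHom := by
      rw [hker]
      exact Ideal.subset_span ⟨i, hi, ha⟩
    exact this
  obtain ⟨G⟩ := grRing_env 𝒜 hconn ε hpos
  have h1 : ModuleCat.projDim (ModuleCat.of A k) ≤ Ring.globalDim A :=
    le_iSup (fun M : ModuleCat.{u} A => M.projDim) (ModuleCat.of A k)
  have h2 : Ring.globalDim A ≤ ModuleCat.projDim (ModuleCat.of (A ⊗[k] Aᵐᵒᵖ) A) := by
    refine iSup_le fun M => le_of_forall_nat fun n hn => ?_
    rw [projDim_le_iff] at hn ⊢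
    exact pd_le_of_env M n hn
  have h3 : ModuleCat.projDim (ModuleCat.of (A ⊗[k] Aᵐᵒᵖ) A) ≤
      ModuleCat.projDim (ModuleCat.of A k) := by
    refine le_of_forall_nat fun n hn => ?_
    rw [projDim_le_iff] at hn ⊢
    have := Rt_self k A
    refine T2 hsmul (etaEnv_tmul ε) G n A (grSelf 𝒜) ?_
    exact hasProjectiveDimensionLT_of_iso (TA k k).symm.toModuleIso (n + 1)
  exact ⟨le_antisymm h3 (h1.trans h2), le_antisymm h1 (h2.trans h3)⟩
end

section
/- Let A be a connected graded k-algebra and let t ∈ A be a homogeneous regular (non-zero-divisor) normal element of positive degree (normal means tA = At). If the projective dimension of the trivial module k over A/(t) is finite, then pdim_A(k) = pdim_{A/(t)}(k) + 1. -/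
open CategoryTheory Limits TensorProduct

universe u

namespace Stmt10

lemma hasPD_of_res {R : Type u} [Ring R] (M : ModuleCat.{u} R) (n : ℕ) (P : ProjectiveResolution M)
    (hP : ∀ i : ℕ, n < i → IsZero (P.complex.X i)) : HasProjectiveDimensionLT M (n + 1) := by
  let := HasExt.standard (ModuleCat.{u} R)
  rw [hasProjectiveDimensionLT_iff]
  intro i hi Y e
  obtain ⟨f, hf, rfl⟩ := P.extMk_surjective e (i+1) rfl
  have : f = 0 := (hP i (by omega)).eq_of_src _ _
  subst this
  simp

section splice
variable {C : Type*} [Category C] [Abelian C]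

noncomputable def q0 {Z : C} (Q : ProjectiveResolution Z) : Q.complex.X 0 ⟶ Z := Q.π.f 0

lemma d_q0 {Z : C} (Q : ProjectiveResolution Z) : Q.complex.d 1 0 ≫ q0 Q = 0 :=
  Q.complex_d_comp_π_f_zero

lemma exact_q0 {Z : C} (Q : ProjectiveResolution Z) :
    (ShortComplex.mk _ _ (d_q0 Q)).Exact := Q.exact₀

instance epi_q0 {Z : C} (Q : ProjectiveResolution Z) : Epi (q0 Q) :=
  inferInstanceAs (Epi (Q.π.f 0))

lemma splice_w {S : ShortComplex C} (Q : ProjectiveResolution S.X₁) :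
    Q.complex.d 1 0 ≫ (q0 Q ≫ S.f : Q.complex.X 0 ⟶ S.X₂) = 0 := by
  have := d_q0 Q
  rw [← Category.assoc, this, zero_comp]

noncomputable def spliceC {S : ShortComplex C} (Q : ProjectiveResolution S.X₁) : ChainComplex C ℕ :=
  ChainComplex.augment Q.complex (X := S.X₂) (q0 Q ≫ S.f) (splice_w Q)

lemma spliceC_d {S : ShortComplex C} (Q : ProjectiveResolution S.X₁) (i j : ℕ) :
   (spliceC Q).d (i+1) (j+1) = Q.complex.d i j := 
  ChainComplex.augment_d_succ_succ _ _ _ _ _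

lemma exact_one {S : ShortComplex C} (hS : S.ShortExact) (Q : ProjectiveResolution S.X₁) :
    (ShortComplex.mk (Q.complex.d 1 0) (q0 Q ≫ S.f : Q.complex.X 0 ⟶ S.X₂) (splice_w Q)).Exact := by
  have := hS.mono_f
  have h := exact_q0 Q
  let φ : ShortComplex.mk _ _ (d_q0 Q) ⟶
    (ShortComplex.mk (Q.complex.d 1 0) (q0 Q ≫ S.f : Q.complex.X 0 ⟶ S.X₂) (splice_w Q)) :=
    { τ₁ := 𝟙 _, τ₂ := 𝟙 _, τ₃ := S.f, comm₁₂ := by simp, comm₂₃ := by exact Category.id_comp _ }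
  have i1 : Epi φ.τ₁ := by dsimp [φ]; infer_instance
  have i2 : IsIso φ.τ₂ := by dsimp [φ]; infer_instance
  have i3 : Mono φ.τ₃ := by dsimp [φ]; infer_instance
  exact (ShortComplex.exact_iff_of_epi_of_isIso_of_mono φ).1 h

lemma exact_zero {S : ShortComplex C} (hS : S.ShortExact) (Q : ProjectiveResolution S.X₁) :
    (ShortComplex.mk (q0 Q ≫ S.f : Q.complex.X 0 ⟶ S.X₂) S.g (by
      rw [Category.assoc, S.zero, comp_zero])).Exact := by
  have h := hS.exact
  let φ : (ShortComplex.mk (q0 Q ≫ S.f : Q.complex.X 0 ⟶ S.X₂) S.g (by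
      rw [Category.assoc, S.zero, comp_zero])) ⟶ S :=
    { τ₁ := q0 Q, τ₂ := 𝟙 _, τ₃ := 𝟙 _, comm₁₂ := by exact (Category.comp_id _).symm, comm₂₃ := by simp }
  have i1 : Epi φ.τ₁ := by dsimp [φ]; infer_instance
  have i2 : IsIso φ.τ₂ := by dsimp [φ]; infer_instance
  have i3 : Mono φ.τ₃ := by dsimp [φ]; infer_instance
  exact (ShortComplex.exact_iff_of_epi_of_isIso_of_mono φ).2 h

lemma spliceπ_w {S : ShortComplex C} (Q : ProjectiveResolution S.X₁) :
    (spliceC Q).d 1 0 ≫ (S.g : (spliceC Q).X 0 ⟶ S.X₃) = 0 := by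
  change (q0 Q ≫ S.f) ≫ S.g = 0
  rw [Category.assoc, S.zero, comp_zero]

noncomputable def spliceπ {S : ShortComplex C} (Q : ProjectiveResolution S.X₁) :
    spliceC Q ⟶ (ChainComplex.single₀ C).obj S.X₃ :=
  (ChainComplex.toSingle₀Equiv (spliceC Q) S.X₃).symm ⟨S.g, spliceπ_w Q⟩

lemma spliceπ_qi {S : ShortComplex C} (hS : S.ShortExact) (Q : ProjectiveResolution S.X₁) :
    QuasiIso (spliceπ Q) := ⟨fun n => by
  rcases n with _ | n
  · rw [ChainComplex.quasiIsoAt₀_iff, ShortComplex.quasiIso_iff_of_zeros']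
    · refine (ShortComplex.exact_and_epi_g_iff_of_iso ?_).2 ⟨exact_zero hS Q, hS.epi_g⟩
      refine ShortComplex.isoMk (Iso.refl _) (Iso.refl _) (Iso.refl _) ?_ ?_
      · exact (Category.id_comp _).trans (Category.comp_id _).symm
      · refine (Category.id_comp _).trans ?_
        refine .trans ?_ (Category.comp_id _).symm
        exact (ChainComplex.toSingle₀Equiv_symm_apply_f_zero (C := spliceC Q) (X := S.X₃) S.g (spliceπ_w Q)).symm
    all_goals rfl
  · rw [quasiIsoAt_iff_exactAt']
    · rw [HomologicalComplex.exactAt_iff' _ (n + 1 + 1) (n + 1) n (by simp) (by simp)]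
      rcases n with _ | n
      · exact exact_one hS Q
      · exact Q.exact_succ n
    · apply ChainComplex.exactAt_succ_single_obj⟩

noncomputable def splice {S : ShortComplex C} (hS : S.ShortExact) (Q : ProjectiveResolution S.X₁)
    (h : Projective S.X₂) : ProjectiveResolution S.X₃ where
  complex := spliceC Q
  projective n := by
    rcases n with _ | n
    · exact h
    · exact Q.projective n
  π := spliceπ Q
  quasiIso := spliceπ_qi hS Q

end splice

noncomputable def scπ {R : Type u} [Ring R] (M : ModuleCat.{u} R) : (M →₀ R) →ₗ[R] M :=
  Finsupp.linearCombination R id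

noncomputable def sc {R : Type u} [Ring R] (M : ModuleCat.{u} R) : ShortComplex (ModuleCat.{u} R) :=
  (scπ M).shortComplexKer

lemma sc_exact {R : Type u} [Ring R] (M : ModuleCat.{u} R) : (sc M).ShortExact := by
  apply LinearMap.shortExact_shortComplexKer
  exact fun m ↦ ⟨Finsupp.single m 1, by simp [scπ]⟩

lemma sc_proj {R : Type u} [Ring R] (M : ModuleCat.{u} R) : Projective (sc M).X₂ :=
  (IsProjective.iff_projective (R := R) (M →₀ R)).1 inferInstance

lemma res_of_hasPD {R : Type u} [Ring R] (n : ℕ) (M : ModuleCat.{u} R)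
    (h : HasProjectiveDimensionLT M (n + 1)) :
    ∃ P : ProjectiveResolution M, ∀ i : ℕ, n < i → IsZero (P.complex.X i) := by
  induction n generalizing M with
  | zero =>
    have := projective_iff_hasProjectiveDimensionLT_one.2 h
    refine ⟨ProjectiveResolution.self M, fun i hi => ?_⟩
    apply HomologicalComplex.isZero_single_obj_X
    omega
  | succ n ih =>
    have hS := sc_exact M
    have hp : Projective (sc M).X₂ :=
      sc_proj M
    obtain ⟨Q, hQ⟩ := ih _ ((hS.hasProjectiveDimensionLT_X₃_iff n hp).1 h)
    refine ⟨splice hS Q hp, fun i hi => ?_⟩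
    obtain ⟨i, rfl⟩ : ∃ j, i = j + 1 := ⟨i - 1, by omega⟩
    exact hQ i (by omega)

lemma projDim_le_iff {R : Type u} [Ring R] (n : ℕ) (M : ModuleCat.{u} R) :
    M.projDim ≤ n ↔ HasProjectiveDimensionLT M (n + 1) := by
  constructor
  · intro h
    have hne : {n : ℕ∞ | ∃ I : ProjectiveResolution M, ∀ i : ℕ, n < (i : ℕ∞) →
      IsZero (I.complex.X i)}.Nonempty := by
      refine ⟨⊤, (HasProjectiveResolution.out (Z := M)).some, fun i hi => ?_⟩
      simp at hi
    obtain ⟨P, hP⟩ := csInf_mem hne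
    refine hasPD_of_res M n P fun i hi => hP i ?_
    exact lt_of_le_of_lt h (by exact_mod_cast hi)
  · intro h
    obtain ⟨P, hP⟩ := res_of_hasPD n M h
    exact sInf_le ⟨P, fun i hi => hP i (by exact_mod_cast hi)⟩

section alg

variable {A B : Type u} [Ring A] [Ring B] (π : A →+* B) (hπ : Function.Surjective π) (t : A)
  (hregl : ∀ x : A, t * x = 0 → x = 0) (hregr : ∀ x : A, x * t = 0 → x = 0)
  (hn1 : ∀ a, ∃ a', t * a = a' * t) (hn2 : ∀ a', ∃ a, t * a = a' * t)
  (hk : ∀ a, π a = 0 ↔ ∃ c, a = c * t)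

include hπ hregl hregr hn1 hn2 hk in
lemma exists_tau : ∃ τ : B ≃+* B, ∀ a a', t * a = a' * t → τ (π a) = π a' := by
  have wd : ∀ a a' b b', t * a = a' * t → t * b = b' * t → π a = π b → π a' = π b' := by
    intro a a' b b' h1 h2 h
    rw [← sub_eq_zero, ← map_sub, hk] at h ⊢
    obtain ⟨c, hc⟩ := h
    obtain ⟨c', hc'⟩ := hn1 c
    refine ⟨c', sub_eq_zero.1 (hregr _ ?_)⟩
    rw [sub_mul, sub_mul, ← h1, ← h2, ← mul_sub, hc, ← mul_assoc, hc', sub_self]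
  have wd' : ∀ a a' b b', t * a = a' * t → t * b = b' * t → π a' = π b' → π a = π b := by
    intro a a' b b' h1 h2 h
    rw [← sub_eq_zero, ← map_sub, hk] at h ⊢
    obtain ⟨c, hc⟩ := h
    obtain ⟨c', hc'⟩ := hn2 c
    refine ⟨c', sub_eq_zero.1 (hregl _ ?_)⟩
    rw [mul_sub, mul_sub, h1, h2, ← sub_mul, hc, ← mul_assoc, hc', sub_self]
  choose s hs using hn1
  let f : B → B := fun b => π (s (Function.surjInv hπ b))
  have hf : ∀ a a', t * a = a' * t → f (π a) = π a' := fun a a' h =>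
    wd _ _ _ _ (hs _) h (Function.surjInv_eq hπ _)
  have hbij : Function.Bijective f := by
    constructor
    · intro x y hxy
      obtain ⟨a, rfl⟩ := hπ x
      obtain ⟨b, rfl⟩ := hπ y
      rw [hf a _ (hs a), hf b _ (hs b)] at hxy
      exact wd' _ _ _ _ (hs a) (hs b) hxy
    · intro y
      obtain ⟨b, rfl⟩ := hπ y
      obtain ⟨a, ha⟩ := hn2 b
      exact ⟨π a, hf _ _ ha⟩
  let F : B →+* B :=
    { toFun := f
      map_one' := by rw [← map_one π]; exact hf 1 1 (by simp)
      map_zero' := by rw [← map_zero π]; exact hf 0 0 (by simp)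
      map_add' := fun x y => by
        obtain ⟨a, rfl⟩ := hπ x
        obtain ⟨b, rfl⟩ := hπ y
        rw [hf a _ (hs a), hf b _ (hs b), ← map_add, ← map_add]
        exact hf _ _ (by rw [mul_add, add_mul, hs, hs])
      map_mul' := fun x y => by
        obtain ⟨a, rfl⟩ := hπ x
        obtain ⟨b, rfl⟩ := hπ y
        rw [hf a _ (hs a), hf b _ (hs b), ← map_mul, ← map_mul]
        exact hf _ _ (by rw [← mul_assoc, hs, mul_assoc, hs, mul_assoc]) }
  exact ⟨RingEquiv.ofBijective F hbij, hf⟩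

include hπ hn2 hk in
lemma exists_quot (N : Type u) [AddCommGroup N] [Module A N] :
    ∃ (Q : Type u) (_ : AddCommGroup Q) (_ : Module B Q) (q : N →+ Q),
      Function.Surjective q ∧ (∀ (a : A) n, q (a • n) = π a • q n) ∧
      (∀ n, q n = 0 ↔ ∃ n', n = t • n') := by
  let T : Submodule A N :=
    { carrier := {x | ∃ n', x = t • n'}
      zero_mem' := ⟨0, by simp⟩
      add_mem' := by
        rintro _ _ ⟨x, rfl⟩ ⟨y, rfl⟩
        exact ⟨x + y, by simp⟩
      smul_mem' := by
        rintro c _ ⟨x, rfl⟩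
        obtain ⟨d, hd⟩ := hn2 c
        exact ⟨d • x, by rw [smul_smul, smul_smul, hd]⟩ }
  have hker : ∀ a, π a = 0 → ∀ x : N ⧸ T, a • x = 0 := by
    intro a ha x
    obtain ⟨x, rfl⟩ := T.mkQ_surjective x
    obtain ⟨c, rfl⟩ := (hk a).1 ha
    rw [← map_smul, ← LinearMap.mem_ker, Submodule.ker_mkQ]
    obtain ⟨d, hd⟩ := hn2 c
    exact ⟨d • x, by rw [← hd, mul_smul]⟩
  let _ : SMul B (N ⧸ T) := ⟨fun b x => Function.surjInv hπ b • x⟩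
  have hs : ∀ (c : A) (x : N ⧸ T), π c • x = c • x := by
    intro c x
    change Function.surjInv hπ (π c) • x = c • x
    rw [← sub_eq_zero, ← sub_smul]
    apply hker
    rw [map_sub, Function.surjInv_eq hπ, sub_self]
  let _ : Module B (N ⧸ T) := hπ.moduleLeft π hs
  refine ⟨N ⧸ T, inferInstance, inferInstance, T.mkQ.toAddMonoidHom, T.mkQ_surjective, ?_, ?_⟩
  · intro a n
    rw [hs]
    exact map_smul T.mkQ a n
  · intro n
    change T.mkQ n = 0 ↔ n ∈ T
    rw [← LinearMap.mem_ker, Submodule.ker_mkQ]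

include hπ hk in
lemma exists_lift {N Q L : Type u} [AddCommGroup N] [Module A N] [AddCommGroup Q] [Module B Q]
    [AddCommGroup L] [Module B L] (q : N →+ Q) (hq : Function.Surjective q)
    (hq1 : ∀ (a : A) n, q (a • n) = π a • q n) (hq2 : ∀ n, q n = 0 ↔ ∃ n', n = t • n')
    (φ : N →+ L) (hφ : ∀ (a : A) n, φ (a • n) = π a • φ n) :
    ∃ ψ : Q →ₗ[B] L, ∀ n, ψ (q n) = φ n := by
  have ht : π t = 0 := (hk t).2 ⟨1, by simp⟩
  have key : ∀ n m, q n = q m → φ n = φ m := by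
    intro n m h
    rw [← sub_eq_zero, ← map_sub] at h ⊢
    obtain ⟨n', h'⟩ := (hq2 _).1 h
    rw [h', hφ, ht, zero_smul]
  have key' : ∀ n, φ (Function.surjInv hq (q n)) = φ n := fun n =>
    key _ _ (Function.surjInv_eq hq _)
  refine ⟨{ toFun := fun x => φ (Function.surjInv hq x), map_add' := ?_, map_smul' := ?_ }, key'⟩
  · intro x y
    obtain ⟨x, rfl⟩ := hq x
    obtain ⟨y, rfl⟩ := hq y
    rw [← map_add, key', key', key', map_add]
  · intro b x
    obtain ⟨x, rfl⟩ := hq x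
    obtain ⟨a, rfl⟩ := hπ b
    rw [← hq1, key', key', hφ]
    rfl

noncomputable def mr (X : Type u) : (X →₀ A) →+ (X →₀ B) := Finsupp.mapRange.addMonoidHom π.toAddMonoidHom

omit t in
lemma mr_single (X : Type u) (x : X) (a : A) : mr π X (Finsupp.single x a) = Finsupp.single x (π a) := by
  simp [mr]

omit t in
lemma mr_apply (X : Type u) (x : X) (f : X →₀ A) : mr π X f x = π (f x) := by
  simp [mr]

omit t in
lemma mr_smul (X : Type u) (a : A) (f : X →₀ A) : mr π X (a • f) = π a • mr π X f := by
  ext x; simp [mr_apply]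

omit t in
include hπ in
lemma mr_surj (X : Type u) : Function.Surjective (mr π X) :=
  Finsupp.mapRange_surjective _ (map_zero π) hπ

omit t [Ring B] in
lemma exists_finsupp {X : Type u} (f : X →₀ A) (P : A → A) (hP : P 0 = 0)
    (h : ∀ x, ∃ c, f x = P c) : ∃ g : X →₀ A, ∀ x, f x = P (g x) := by
  classical
  choose c hc using h
  refine ⟨Finsupp.onFinset f.support (fun x => if f x = 0 then 0 else c x) (by
    intro x; simp; tauto), fun x => ?_⟩
  by_cases h0 : f x = 0
  · simp [h0, hP]
  · simp [h0, ← hc x]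

include hn2 hk in
lemma mr_ker (X : Type u) (f : X →₀ A) (h : mr π X f = 0) : ∃ g, f = t • g := by
  have : ∀ x, ∃ c, f x = t * c := by
    intro x
    have := DFunLike.congr_fun h x
    rw [mr_apply, Finsupp.zero_apply, hk] at this
    obtain ⟨c, hc⟩ := this
    obtain ⟨d, hd⟩ := hn2 c
    exact ⟨d, by rw [hc, hd]⟩
  obtain ⟨g, hg⟩ := exists_finsupp f (fun c => t * c) (by simp) this
  exact ⟨g, by ext x; exact hg x⟩

include hk in
lemma mr_ker2 (X : Type u) (f : X →₀ A) (h : mr π X f = 0) : ∃ g : X →₀ A, ∀ x, f x = g x * t := by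
  refine exists_finsupp f (fun c => c * t) (by simp) fun x => ?_
  have := DFunLike.congr_fun h x
  rwa [mr_apply, Finsupp.zero_apply, hk] at this

include hk hπ in
lemma quot_proj {N Q : Type u} [AddCommGroup N] [Module A N] [AddCommGroup Q] [Module B Q]
    (q : N →+ Q) (hq : Function.Surjective q)
    (hq1 : ∀ (a : A) n, q (a • n) = π a • q n) (hq2 : ∀ n, q n = 0 ↔ ∃ n', n = t • n')
    [Module.Projective A N] : Module.Projective B Q := by
  obtain ⟨s, hs⟩ := Module.projective_def'.1 (inferInstance : Module.Projective A N)
  obtain ⟨i, hi⟩ := exists_lift π hπ t hk q hq hq1 hq2 ((mr π N).comp s.toAddMonoidHom) (by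
    intro a n
    simp [mr_smul])
  let r : (N →₀ B) →ₗ[B] Q := Finsupp.linearCombination B q
  have hr : ∀ f, r (mr π N f) = q (Finsupp.linearCombination A id f) := by
    intro f
    induction f using Finsupp.induction_linear with
    | zero => simp
    | add f g hf hg => simp [hf, hg]
    | single x a => simp [mr_single, r, hq1]
  refine Module.Projective.of_split i r ?_
  ext x
  obtain ⟨n, rfl⟩ := hq x
  have := LinearMap.congr_fun hs n
  simp only [LinearMap.comp_apply, hi, LinearMap.id_apply]
  change r (mr π N (s n)) = q n
  rw [hr]
  congr 1

/-- the A-linear surjection from the free module -/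
noncomputable def pA (M : Type u) [AddCommGroup M] [Module A M] : (M →₀ A) →ₗ[A] M :=
  Finsupp.linearCombination A id

omit t in
lemma pA_mr {M : Type u} [AddCommGroup M] [Module A M] [Module B M]
    (hc : ∀ (a : A) (m : M), a • m = π a • m) (f : M →₀ A) : pA (A := B) M (mr π M f) = pA M f := by
  induction f using Finsupp.induction_linear with
  | zero => simp
  | add f g hf hg => simp [hf, hg]
  | single x a => simp [mr_single, pA, hc]

include hregl hk in
lemma case0 {M : Type u} [AddCommGroup M] [Module A M] [Module B M]
    (hc : ∀ (a : A) (m : M), a • m = π a • m) [Module.Projective A M] : Subsingleton M := by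
  have ht : π t = 0 := (hk t).2 ⟨1, by simp⟩
  obtain ⟨s, hs⟩ := Module.projective_def'.1 (inferInstance : Module.Projective A M)
  refine subsingleton_of_forall_eq 0 fun m => ?_
  have h : s m = 0 := by
    have h1 : t • s m = 0 := by rw [← map_smul, hc, ht, zero_smul, map_zero]
    ext x
    exact hregl _ (DFunLike.congr_fun h1 x)
  have := LinearMap.congr_fun hs m
  rw [LinearMap.comp_apply, h, map_zero] at this
  exact this.symm

attribute [local instance] RingHomInvPair.of_ringEquiv in
include hregl hregr hk hπ hn1 hn2 in
lemma case1 {M : Type u} [AddCommGroup M] [Module A M] [Module B M]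
    (hc : ∀ (a : A) (m : M), a • m = π a • m)
    [Module.Projective A (LinearMap.ker (pA (A := A) M))]
    [Module.Projective B (LinearMap.ker (pA (A := B) M))] : Module.Projective B M := by
  have ht : π t = 0 := (hk t).2 ⟨1, by simp⟩
  set K := LinearMap.ker (pA (A := A) M) with hK
  set L := LinearMap.ker (pA (A := B) M) with hL
  obtain ⟨Q, _, _, q, hq, hq1, hq2⟩ := exists_quot π hπ t hn2 hk K
  have hQ : Module.Projective B Q := quot_proj π hπ t hk q hq hq1 hq2
  let φ : K →+ L :=
    { toFun := fun x => ⟨mr π M x, by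
        rw [hL, LinearMap.mem_ker, pA_mr π hc]
        exact LinearMap.mem_ker.1 x.2⟩
      map_zero' := by ext1; simp
      map_add' := fun x y => by ext1; simp }
  have hφ : ∀ (a : A) n, φ (a • n) = π a • φ n := by
    intro a n
    ext1
    simp [φ, mr_smul]
  obtain ⟨ψ, hψ⟩ := exists_lift π hπ t hk q hq hq1 hq2 φ hφ
  have hψs : Function.Surjective ψ := by
    rintro ⟨y, hy⟩
    obtain ⟨f, rfl⟩ := mr_surj π hπ M y
    rw [hL, LinearMap.mem_ker, pA_mr π hc] at hy
    exact ⟨q ⟨f, hy⟩, by rw [hψ]; rfl⟩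
  obtain ⟨s, hs⟩ := Module.projective_lifting_property ψ LinearMap.id hψs
  have hs' : ∀ x, ψ (s x) = x := fun x => LinearMap.congr_fun hs x
  have hker : Module.Projective B (LinearMap.ker ψ) := by
    refine Module.Projective.of_split (LinearMap.ker ψ).subtype
      (LinearMap.codRestrict _ (LinearMap.id - s.comp ψ) (fun x => by simp [hs'])) ?_
    ext x
    simp
  obtain ⟨τ, hτ⟩ := exists_tau π hπ t hregl hregr hn1 hn2 hk
  -- the class of t • f
  have hmem : ∀ f : M →₀ A, t • f ∈ K := by
    intro f
    rw [hK, LinearMap.mem_ker, map_smul, hc, ht, zero_smul]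
  let g : (M →₀ A) → LinearMap.ker ψ := fun f => ⟨q ⟨t • f, hmem f⟩, by
    rw [LinearMap.mem_ker, hψ]
    ext1
    simp [φ, mr_smul, ht]⟩
  have gadd : ∀ f f', g (f + f') = g f + g f' := by
    intro f f'
    ext1
    simp only [g, Submodule.coe_add]
    rw [← map_add]
    congr 1
    ext1
    simp
  have gsmul : ∀ a a' f, t * a = a' * t → g (a • f) = π a' • g f := by
    intro a a' f h
    ext1
    simp only [g, Submodule.coe_smul]
    rw [← hq1]
    congr 1
    ext1
    simp [smul_smul, h]
  have gker : ∀ f, g f = 0 ↔ pA M f = 0 := by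
    intro f
    rw [← LinearMap.mem_ker, ← hK, Subtype.ext_iff]
    simp only [g, Submodule.coe_zero]
    rw [hq2]
    constructor
    · rintro ⟨n, hn⟩
      have h1 : t • f = t • (n : M →₀ A) := congrArg Subtype.val hn
      have h2 : f = n := by
        ext x
        refine sub_eq_zero.1 (hregl _ ?_)
        rw [mul_sub, sub_eq_zero]
        exact DFunLike.congr_fun h1 x
      rw [h2]; exact n.2
    · intro h
      exact ⟨⟨f, h⟩, by ext1; simp⟩
  have gsub : ∀ f f', g f = g f' ↔ pA M f = pA M f' := by
    intro f f'
    have h1 : g f = g (f - f') + g f' := by rw [← gadd, sub_add_cancel]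
    rw [h1, add_eq_right, gker, map_sub, sub_eq_zero]
  have gsurj : ∀ y, ∃ f, g f = y := by
    rintro ⟨y, hy⟩
    obtain ⟨x, rfl⟩ := hq y
    rw [LinearMap.mem_ker, hψ] at hy
    obtain ⟨f, hf⟩ := mr_ker π t hn2 hk M x (congrArg Subtype.val hy)
    refine ⟨f, ?_⟩
    ext1
    simp only [g]
    congr 1
    ext1
    exact hf.symm
  have hp1 : ∀ m : M, pA M (Finsupp.single m (1 : A)) = m := fun m => by simp [pA]
  let e0 : M →ₛₗ[RingHomClass.toRingHom τ] LinearMap.ker ψ :=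
    { toFun := fun m => g (Finsupp.single m 1)
      map_add' := fun m m' => by
        rw [← gadd, gsub, map_add, hp1, hp1, hp1]
      map_smul' := fun b m => by
        obtain ⟨a, rfl⟩ := hπ b
        obtain ⟨a', ha'⟩ := hn1 a
        have : (RingHomClass.toRingHom τ) (π a) = π a' := hτ a a' ha'
        rw [this, ← gsmul a a' _ ha', gsub, map_smul, hp1, hp1, hc] }
  have hbij : Function.Bijective e0 := by
    constructor
    · intro m m' h
      have := (gsub _ _).1 h
      rwa [hp1, hp1] at this
    · intro y
      obtain ⟨f, rfl⟩ := gsurj y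
      refine ⟨pA M f, (gsub _ _).2 ?_⟩
      rw [hp1]
  exact Module.Projective.of_equiv (LinearEquiv.ofBijective e0 hbij).symm

end alg

section main

variable {A B : Type u} [Ring A] [Ring B] (π : A →+* B) (hπ : Function.Surjective π) (t : A)
  (hregl : ∀ x : A, t * x = 0 → x = 0) (hregr : ∀ x : A, x * t = 0 → x = 0)
  (hn1 : ∀ a, ∃ a', t * a = a' * t) (hn2 : ∀ a', ∃ a, t * a = a' * t)
  (hk : ∀ a, π a = 0 ↔ ∃ c, a = c * t)

noncomputable abbrev res : ModuleCat.{u} B ⥤ ModuleCat.{u} A := ModuleCat.restrictScalars π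

noncomputable def mrL (X : Type u) :
    (X →₀ A) →ₗ[A] ((res π).obj (ModuleCat.of B (X →₀ B))) where
  toFun f := mr π X f
  map_add' f g := map_add (mr π X) f g
  map_smul' a f := mr_smul π X a f

noncomputable def rt (X : Type u) : (X →₀ A) →ₗ[A] (X →₀ A) :=
  Finsupp.mapRange.linearMap (LinearMap.toSpanSingleton A A t)

lemma rt_apply (X : Type u) (f : X →₀ A) (x : X) : rt t X f x = f x * t := by
  simp [rt]

include hπ hregr hk in
lemma free_pd (X : Type u) :
    HasProjectiveDimensionLT ((res π).obj (ModuleCat.of B (X →₀ B))) 2 := by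
  have ht : π t = 0 := (hk t).2 ⟨1, by simp⟩
  let S : ShortComplex (ModuleCat.{u} A) :=
    { X₁ := ModuleCat.of A (X →₀ A)
      X₂ := ModuleCat.of A (X →₀ A)
      X₃ := (res π).obj (ModuleCat.of B (X →₀ B))
      f := ModuleCat.ofHom (rt t X)
      g := ConcreteCategory.ofHom (C := ModuleCat.{u} A) (X := ModuleCat.of A (X →₀ A))
        (Y := (res π).obj (ModuleCat.of B (X →₀ B))) (mrL π X)
      zero := by
        ext1
        refine LinearMap.ext fun f => ?_
        change mr π X (rt t X f) = 0
        ext x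
        rw [mr_apply, rt_apply, map_mul, ht, mul_zero, Finsupp.zero_apply] }
  have hS : S.ShortExact :=
    { exact := by
        rw [ShortComplex.moduleCat_exact_iff]
        intro f hf
        obtain ⟨g, hg⟩ := mr_ker2 π t hk X f hf
        refine ⟨g, ?_⟩
        change rt t X g = f
        ext x
        rw [rt_apply, hg]
      mono_f := by
        rw [ModuleCat.mono_iff_injective]
        change Function.Injective (rt t X)
        rw [injective_iff_map_eq_zero]
        intro f hf
        ext x
        refine hregr _ ?_
        rw [← rt_apply, hf]; rfl
      epi_g := by
        rw [ModuleCat.epi_iff_surjective]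
        exact mr_surj π hπ X }
  have hp : Projective (ModuleCat.of A (X →₀ A)) :=
    (IsProjective.iff_projective (R := A) (X →₀ A)).1 inferInstance
  exact (hS.hasProjectiveDimensionLT_X₃_iff 0 hp).2
    (projective_iff_hasProjectiveDimensionLT_one.1 hp)

lemma sc_res_exact (M : ModuleCat.{u} B) : ((sc M).map (res π)).ShortExact :=
  { exact := by
      have := (ShortComplex.moduleCat_exact_iff _).1 (sc_exact M).exact
      exact (ShortComplex.moduleCat_exact_iff _).2 this
    mono_f := (ModuleCat.mono_iff_injective _).2
      ((ModuleCat.mono_iff_injective (sc M).f).1 (sc_exact M).mono_f)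
    epi_g := (ModuleCat.epi_iff_surjective _).2
      ((ModuleCat.epi_iff_surjective (sc M).g).1 (sc_exact M).epi_g) }

include hπ hregr hk in
lemma upper (n : ℕ) (M : ModuleCat.{u} B) (h : HasProjectiveDimensionLT M (n + 1)) :
    HasProjectiveDimensionLT ((res π).obj M) (n + 2) := by
  induction n generalizing M with
  | zero =>
    have hM := projective_iff_hasProjectiveDimensionLT_one.2 h
    let g : (sc M).X₂ ⟶ M := (sc M).g
    have hp : Epi g := (sc_exact M).epi_g
    let r : Retract M (sc M).X₂ :=
      ⟨Projective.factorThru (𝟙 M) g, g, Projective.factorThru_comp _ _⟩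
    have : HasProjectiveDimensionLT ((res π).obj (sc M).X₂) 2 := free_pd π hπ t hregr hk M
    exact (r.map (res π)).hasProjectiveDimensionLT 2
  | succ n ih =>
    have h1 := ih _ (((sc_exact M).hasProjectiveDimensionLT_X₃_iff n (sc_proj M)).1 h)
    have h2 : HasProjectiveDimensionLT ((sc M).map (res π)).X₂ 2 := free_pd π hπ t hregr hk M
    exact (sc_res_exact π M).hasProjectiveDimensionLT_X₃ (n + 2) h1
      (hasProjectiveDimensionLT_of_ge _ 2 _ (by omega))

include hπ hregl hregr hn1 hn2 hk in
lemma lower (n : ℕ) (M : ModuleCat.{u} B) (h : HasProjectiveDimensionLT M (n + 1))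
    (hA : HasProjectiveDimensionLT ((res π).obj M) (n + 1)) :
    HasProjectiveDimensionLT M n := by
  match n with
  | 0 =>
    have h1 := projective_iff_hasProjectiveDimensionLT_one.2 hA
    let _ : Module A M := Module.compHom M π
    have h2 : Module.Projective A M := (IsProjective.iff_projective (R := A) M).2 h1
    have := case0 π t hregl hk (M := M) (fun _ _ => rfl)
    rw [hasProjectiveDimensionLT_zero_iff_isZero]
    exact ModuleCat.isZero_of_subsingleton M
  | 1 =>
    have hB1 := ((sc_exact M).hasProjectiveDimensionLT_X₃_iff 0 (sc_proj M)).1 h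
    have hA1 := ((sc_exact ((res π).obj M)).hasProjectiveDimensionLT_X₃_iff 0 (sc_proj _)).1 hA
    have hB2 := projective_iff_hasProjectiveDimensionLT_one.2 hB1
    have hA2 := projective_iff_hasProjectiveDimensionLT_one.2 hA1
    let _ : Module A M := Module.compHom M π
    have hB3 : Module.Projective B (LinearMap.ker (pA (A := B) M)) :=
      (IsProjective.iff_projective (R := B) _).2 hB2
    have hA3 : Module.Projective A (LinearMap.ker (pA (A := A) M)) :=
      (IsProjective.iff_projective (R := A) _).2 hA2
    have := case1 π hπ t hregl hregr hn1 hn2 hk (M := M) (fun _ _ => rfl)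
    exact projective_iff_hasProjectiveDimensionLT_one.1
      ((IsProjective.iff_projective (R := B) M).1 this)
  | n + 2 =>
    have hB1 := ((sc_exact M).hasProjectiveDimensionLT_X₃_iff (n + 1) (sc_proj M)).1 h
    have h2 : HasProjectiveDimensionLT ((sc M).map (res π)).X₂ 2 := free_pd π hπ t hregr hk M
    have hA1 := (sc_res_exact π M).hasProjectiveDimensionLT_X₁ (n + 2)
      (hasProjectiveDimensionLT_of_ge _ 2 _ (by omega)) hA
    have := lower (n + 1) (sc M).X₁ hB1 hA1
    exact ((sc_exact M).hasProjectiveDimensionLT_X₃_iff n (sc_proj M)).2 this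

noncomputable def isoRes (M : Type u) [AddCommGroup M] [Module A M] [Module B M]
    (hc : ∀ (a : A) (m : M), a • m = π a • m) :
    ModuleCat.of A M ≅ (res π).obj (ModuleCat.of B M) where
  hom := ConcreteCategory.ofHom (C := ModuleCat.{u} A) (X := ModuleCat.of A M)
    (Y := (res π).obj (ModuleCat.of B M))
    { toFun := fun m => m, map_add' := fun _ _ => rfl, map_smul' := hc }
  inv := ConcreteCategory.ofHom (C := ModuleCat.{u} A) (Y := ModuleCat.of A M)
    (X := (res π).obj (ModuleCat.of B M))
    { toFun := fun m => m, map_add' := fun _ _ => rfl, map_smul' := fun a m => (hc a m).symm }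
  hom_inv_id := rfl
  inv_hom_id := rfl

end main

end Stmt10

/-- Lemma 4.3(e): let `A` be a connected graded `k`-algebra and let `t ∈ A` be a
homogeneous regular normal element of positive degree.  Let `B = A/(t)` (presented as a
surjective algebra map `π : A → B` with kernel the ideal generated by `t`), with the induced
augmentation `εB`.  If the projective dimension of the trivial module `k` over `B` is finite,
then `pdim_A k = pdim_B k + 1`. -/
theorem stmt_10 (k : Type u) [Field k] (A : Type u) [Ring A] [Algebra k A]
    (𝒜 : ℕ → Submodule k A) [GradedAlgebra 𝒜]
    (hconn : 𝒜 0 = (1 : Submodule k A))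
    (ε : A →ₐ[k] k)
    (hker : RingHom.ker ε.toRingHom = Ideal.span {x : A | ∃ i, 0 < i ∧ x ∈ 𝒜 i})
    (t : A) (d : ℕ) (hd : 0 < d) (ht : t ∈ 𝒜 d)
    (hregl : ∀ x : A, t * x = 0 → x = 0) (hregr : ∀ x : A, x * t = 0 → x = 0)
    (hnormal : Set.range (fun a : A => t * a) = Set.range (fun a : A => a * t))
    (B : Type u) [Ring B] [Algebra k B] (π : A →ₐ[k] B) (hπ : Function.Surjective π)
    (hkerπ : RingHom.ker π.toRingHom = Ideal.span {t})
    (εB : B →ₐ[k] k) (hεB : εB.comp π = ε)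
    [Module A k] (hsmul : ∀ (a : A) (c : k), a • c = ε a * c)
    [Module B k] (hsmulB : ∀ (b : B) (c : k), b • c = εB b * c)
    (hfin : ModuleCat.projDim (ModuleCat.of B k) ≠ ⊤) :
    ModuleCat.projDim (ModuleCat.of A k) = ModuleCat.projDim (ModuleCat.of B k) + 1 := by
  have hn1 : ∀ a, ∃ a', t * a = a' * t := fun a => by
    obtain ⟨b, hb⟩ := (Set.ext_iff.1 hnormal (t * a)).1 ⟨a, rfl⟩
    exact ⟨b, hb.symm⟩
  have hn2 : ∀ a', ∃ a, t * a = a' * t := fun a => by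
    obtain ⟨b, hb⟩ := (Set.ext_iff.1 hnormal (a * t)).2 ⟨a, rfl⟩
    exact ⟨b, hb⟩
  have hk : ∀ a, π.toRingHom a = 0 ↔ ∃ c, a = c * t := fun a => by
    rw [← RingHom.mem_ker, hkerπ, Ideal.mem_span_singleton']
    exact exists_congr fun c => eq_comm
  let e : ModuleCat.of A k ≅ (ModuleCat.restrictScalars π.toRingHom).obj (ModuleCat.of B k) :=
    Stmt10.isoRes π.toRingHom k fun a c => by
      rw [hsmul, hsmulB, ← hεB]
      rfl
  have hle : ∀ n : ℕ, ModuleCat.projDim (ModuleCat.of A k) ≤ n ↔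
      HasProjectiveDimensionLT
        ((ModuleCat.restrictScalars π.toRingHom).obj (ModuleCat.of B k)) (n + 1) := fun n => by
    rw [Stmt10.projDim_le_iff]
    exact ⟨fun h => hasProjectiveDimensionLT_of_iso e _, fun h => hasProjectiveDimensionLT_of_iso e.symm _⟩
  obtain ⟨n, hn⟩ := ENat.ne_top_iff_exists.1 hfin
  rw [← hn]
  have hB := (Stmt10.projDim_le_iff n _).1 hn.symm.le
  apply le_antisymm
  · exact_mod_cast (hle (n + 1)).2 (Stmt10.upper π.toRingHom hπ t hregr hk n _ hB)
  · by_contra hlt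
    have h1 : ModuleCat.projDim (ModuleCat.of A k) ≤ n := by
      rw [not_le] at hlt
      exact Order.le_of_lt_add_one hlt
    have h2 := Stmt10.lower π.toRingHom hπ t hregl hregr hn1 hn2 hk n _ hB ((hle n).1 h1)
    rcases n with _ | n
    · rw [hasProjectiveDimensionLT_zero_iff_isZero] at h2
      have h3 : Subsingleton k := ModuleCat.subsingleton_of_isZero h2
      exact not_subsingleton k h3
    · have h3 := (Stmt10.projDim_le_iff n _).2 h2
      rw [← hn] at h3
      have : n + 1 ≤ n := by exact_mod_cast h3
      omega
end
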